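/- Let $n\geq 1$, $s\in(0,1)$, $k\in\mathbb{N}$, $\varepsilon>0$, and let $\sigma\in C^k(\overline{B_1}\times[-1,1],(0,+\infty))$ be a positive function on $\overline{B_1}\times[-1,1]\subset\mathbb{R}^{n+1}$. Then there exist functions $u_\varepsilon,\sigma_\varepsilon\in C^\infty(B_1\times(-1,1),(0,+\infty))\cap C(\mathbb{R}^{n+1})$, compactly supported in $\mathbb{R}^{n+1}$, such that: (1) $\partial_t u_\varepsilon+(-\Delta)^s u_\varepsilon=(\sigma_\varepsilon-u_\varepsilon)u_\varepsilon$ in $B_1\times(-1,1)$; (2) $u_\varepsilon=\sigma_\varepsilon$ in $B_1\times(-1,1)$; (3) $\|\sigma-\sigma_\varepsilon\|_{C^k(B_1\times(-1,1))}\leq\varepsilon$. -/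

import Mathlib

open MeasureTheory Filter Metric Set

/-- The normalizing constant `C(n,s)` of the fractional Laplacian. -/
noncomputable def fracC (n : ℕ) (s : ℝ) : ℝ :=
  4 ^ s * s * Real.Gamma ((n : ℝ) / 2 + s) / (Real.pi ^ ((n : ℝ) / 2) * Real.Gamma (1 - s))

/-- `HasFracLap n s u x L` : the principal value limit defining `(-Δ)^s u (x)`
exists and equals `L`. -/
def HasFracLap (n : ℕ) (s : ℝ) (u : EuclideanSpace ℝ (Fin n) → ℝ)
    (x : EuclideanSpace ℝ (Fin n)) (L : ℝ) : Prop :=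
  Tendsto (fun ρ : ℝ =>
      fracC n s * ∫ y in {y : EuclideanSpace ℝ (Fin n) | ρ ≤ ‖y‖},
        (u x - u (x + y)) / ‖y‖ ^ ((n : ℝ) + 2 * s))
    (nhdsWithin 0 (Set.Ioi 0)) (nhds L)

namespace FractionalHeat

open scoped ContDiff Topology

/-- Space-time `ℝⁿ × ℝ`. -/
abbrev Spacetime (n : ℕ) : Type := EuclideanSpace ℝ (Fin n) × ℝ

/-- Smooth compactly supported functions on space-time. -/
def IsTest {n : ℕ} (φ : Spacetime n → ℝ) : Prop := ContDiff ℝ ∞ φ ∧ HasCompactSupport φ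

/-- The second difference of `φ` at `p` in the spatial direction `y`. -/
def secondDiff {n : ℕ} (φ : Spacetime n → ℝ) (p : Spacetime n) (y : EuclideanSpace ℝ (Fin n)) : ℝ :=
  2 * φ p - φ (p + (y, 0)) - φ (p - (y, 0))

/-- The fractional Laplacian in the space variable, in its absolutely convergent form, with
normalizing constant `c` and kernel `‖y‖ ^ (-a)`. -/
noncomputable def fracOp {n : ℕ} (c a : ℝ) (φ : Spacetime n → ℝ) (p : Spacetime n) : ℝ :=
  c / 2 * ∫ y : EuclideanSpace ℝ (Fin n), secondDiff φ p y * ‖y‖ ^ (-a)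

/-- The time derivative. -/
noncomputable def timeDeriv {n : ℕ} (φ : Spacetime n → ℝ) (p : Spacetime n) : ℝ :=
  fderiv ℝ φ p (0, 1)

variable {n : ℕ}

instance : (volume : Measure (Spacetime n)).IsAddHaarMeasure :=
  Measure.prod.instIsAddHaarMeasure volume volume

theorem integrable_kernel [NeZero n] {a : ℝ} (ha : (n : ℝ) < a) (ha' : a < n + 2) :
    Integrable (fun y : EuclideanSpace ℝ (Fin n) => min (‖y‖ ^ 2) 1 * ‖y‖ ^ (-a)) := by
  have hn : 1 ≤ n := NeZero.one_le
  rw [integrable_fun_norm_addHaar volume (f := fun r : ℝ => min (r ^ 2) 1 * r ^ (-a)),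
    ← Ioc_union_Ioi_eq_Ioi zero_le_one, integrableOn_union]
  simp only [finrank_euclideanSpace, Fintype.card_fin, smul_eq_mul]
  have hcast : ((n - 1 : ℕ) : ℝ) = n - 1 := by push_cast [hn]; ring
  constructor
  · have h := (intervalIntegral.intervalIntegrable_rpow' (a := 0) (b := 1)
      (r := (n : ℝ) + 1 - a) (by linarith)).1
    refine h.congr_fun (fun r hr => ?_) measurableSet_Ioc
    have h1 : min (r ^ 2) 1 = r ^ 2 := min_eq_left (by nlinarith [hr.1, hr.2])
    simp only [h1]
    rw [← Real.rpow_natCast r (n - 1), ← Real.rpow_natCast r 2, ← Real.rpow_add hr.1,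
      ← Real.rpow_add hr.1, hcast]
    congr 1
    push_cast
    ring
  · have h := integrableOn_Ioi_rpow_of_lt (a := (n : ℝ) - 1 - a) (by linarith) one_pos
    refine h.congr_fun (fun r hr => ?_) measurableSet_Ioi
    have hr1 : (1 : ℝ) < r := hr
    have hr0 : 0 < r := by linarith
    have h1 : min (r ^ 2) 1 = 1 := min_eq_right (by nlinarith)
    simp only [h1]
    rw [one_mul, ← Real.rpow_natCast r (n - 1), ← Real.rpow_add hr0, hcast]
    congr 1

theorem IsTest.continuous {φ : Spacetime n → ℝ} (hφ : IsTest φ) : Continuous φ := hφ.1.continuous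

theorem IsTest.add_const_mul {φ ψ : Spacetime n → ℝ} (hφ : IsTest φ) (hψ : IsTest ψ) (r : ℝ) :
    IsTest (fun p => φ p + r * ψ p) :=
  ⟨hφ.1.add (contDiff_const.mul hψ.1), hφ.2.add hψ.2.mul_left⟩

theorem IsTest.reflect {φ : Spacetime n → ℝ} (hφ : IsTest φ) (p : Spacetime n) :
    IsTest (fun z => φ (p - z)) :=
  ⟨hφ.1.comp (contDiff_const.sub contDiff_id),
    hφ.2.comp_homeomorph (Homeomorph.subLeft p)⟩

theorem IsTest.integrable {φ : Spacetime n → ℝ} (hφ : IsTest φ) : Integrable φ :=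
  hφ.continuous.integrable_of_hasCompactSupport hφ.2

/-- A smooth compactly supported function has second differences controlled by `min (‖y‖²) 1`. -/
theorem IsTest.secondDiff_bound {φ : Spacetime n → ℝ} (hφ : IsTest φ) :
    ∃ M : ℝ, 0 ≤ M ∧ ∀ p y, |secondDiff φ p y| ≤ M * min (‖y‖ ^ 2) 1 := by
  obtain ⟨A, hA⟩ := hφ.2.exists_bound_of_continuous hφ.continuous
  have hd : ContDiff ℝ 1 (fderiv ℝ φ) := hφ.1.fderiv_right (by norm_cast)
  obtain ⟨K, hK⟩ := hd.lipschitzWith_of_hasCompactSupport (hφ.2.fderiv ℝ) one_ne_zero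
  have hA0 : 0 ≤ A := (norm_nonneg _).trans (hA 0)
  have taylor : ∀ p v : Spacetime n, |φ (p + v) - φ p - fderiv ℝ φ p v| ≤ K * ‖v‖ ^ 2 := by
    intro p v
    have h := (convex_closedBall p ‖v‖).norm_image_sub_le_of_norm_fderiv_le' (𝕜 := ℝ)
      (f := φ) (φ := fderiv ℝ φ p) (x := p) (y := p + v) (C := K * ‖v‖)
      (fun x _ => hφ.1.differentiable (by simp) x)
      (fun x hx => ?_) (by simp) (by simp)
    · rw [add_sub_cancel_left] at h
      rw [← Real.norm_eq_abs]
      exact h.trans_eq (by ring)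
    · rw [← dist_eq_norm]
      exact (hK.dist_le_mul x p).trans
        (mul_le_mul_of_nonneg_left (mem_closedBall.1 hx) K.2)
  refine ⟨2 * K + 4 * A, by positivity, fun p y => ?_⟩
  have h1 := taylor p (y, 0)
  have h2 := taylor p (-(y, 0))
  have hn : ‖((y, 0) : Spacetime n)‖ = ‖y‖ := by simp [Prod.norm_def]
  rw [norm_neg, map_neg] at h2
  rw [hn] at h1 h2
  have b1 := hA p
  have b2 := hA (p + (y, 0))
  have b3 := hA (p - (y, 0))
  rw [Real.norm_eq_abs] at b1 b2 b3
  rw [← sub_eq_add_neg] at h2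
  have hK0 : (0 : ℝ) ≤ K := K.2
  rcases le_total (‖y‖ ^ 2) 1 with h | h
  · rw [min_eq_left h]
    have : |secondDiff φ p y| ≤ 2 * K * ‖y‖ ^ 2 := by
      unfold secondDiff
      rw [abs_le] at *
      constructor <;> linarith [h1.1, h1.2, h2.1, h2.2]
    nlinarith [sq_nonneg ‖y‖, mul_nonneg hA0 (sq_nonneg ‖y‖)]
  · rw [min_eq_right h]
    unfold secondDiff
    rw [abs_le] at *
    constructor <;> linarith [b1.1, b1.2, b2.1, b2.2, b3.1, b3.2]

theorem continuous_secondDiff {φ : Spacetime n → ℝ} (hφ : Continuous φ) :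
    Continuous (fun q : Spacetime n × EuclideanSpace ℝ (Fin n) => secondDiff φ q.1 q.2) := by
  unfold secondDiff
  fun_prop

theorem measurable_kernel (a : ℝ) :
    Measurable (fun y : EuclideanSpace ℝ (Fin n) => ‖y‖ ^ (-a)) := by fun_prop

theorem norm_secondDiff_mul_le {φ : Spacetime n → ℝ} {M : ℝ}
    (hM : ∀ p y, |secondDiff φ p y| ≤ M * min (‖y‖ ^ 2) 1) (a : ℝ) (p : Spacetime n)
    (y : EuclideanSpace ℝ (Fin n)) :
    ‖secondDiff φ p y * ‖y‖ ^ (-a)‖ ≤ M * (min (‖y‖ ^ 2) 1 * ‖y‖ ^ (-a)) := by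
  have h0 : 0 ≤ ‖y‖ ^ (-a) := by positivity
  rw [norm_mul, Real.norm_eq_abs, Real.norm_of_nonneg h0, ← mul_assoc]
  exact mul_le_mul_of_nonneg_right (hM p y) h0

theorem IsTest.integrable_secondDiff [NeZero n] {a : ℝ} (ha : (n : ℝ) < a) (ha' : a < n + 2)
    {φ : Spacetime n → ℝ} (hφ : IsTest φ) (p : Spacetime n) :
    Integrable (fun y : EuclideanSpace ℝ (Fin n) => secondDiff φ p y * ‖y‖ ^ (-a)) := by
  obtain ⟨M, -, hM⟩ := hφ.secondDiff_bound
  refine ((integrable_kernel ha ha').const_mul M).mono' ?_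
    (.of_forall fun y => norm_secondDiff_mul_le hM a p y)
  exact (((continuous_secondDiff hφ.continuous).comp (Continuous.prodMk_right p)).measurable.mul
    (measurable_kernel a)).aestronglyMeasurable

theorem IsTest.continuous_fracOp [NeZero n] {c a : ℝ} (ha : (n : ℝ) < a) (ha' : a < n + 2)
    {φ : Spacetime n → ℝ} (hφ : IsTest φ) : Continuous (fracOp c a φ) := by
  obtain ⟨M, -, hM⟩ := hφ.secondDiff_bound
  refine continuous_const.mul (continuous_of_dominated
    (fun p => (hφ.integrable_secondDiff ha ha' p).aestronglyMeasurable)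
    (fun p => .of_forall fun y => norm_secondDiff_mul_le hM a p y)
    ((integrable_kernel ha ha').const_mul M) (.of_forall fun y => ?_))
  exact ((continuous_secondDiff hφ.continuous).comp (Continuous.prodMk_left y)).mul continuous_const

theorem IsTest.continuous_timeDeriv {φ : Spacetime n → ℝ} (hφ : IsTest φ) :
    Continuous (timeDeriv φ) :=
  (hφ.1.continuous_fderiv (by simp)).clm_apply continuous_const

theorem fracOp_add_const_mul [NeZero n] {c a : ℝ} (ha : (n : ℝ) < a) (ha' : a < n + 2)
    {φ ψ : Spacetime n → ℝ} (hφ : IsTest φ) (hψ : IsTest ψ) (r : ℝ) (p : Spacetime n) :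
    fracOp c a (fun q => φ q + r * ψ q) p = fracOp c a φ p + r * fracOp c a ψ p := by
  have h1 := hφ.integrable_secondDiff ha ha' p
  have h2 := hψ.integrable_secondDiff ha ha' p
  have : ∀ y : EuclideanSpace ℝ (Fin n), secondDiff (fun q => φ q + r * ψ q) p y * ‖y‖ ^ (-a) =
      secondDiff φ p y * ‖y‖ ^ (-a) + r * (secondDiff ψ p y * ‖y‖ ^ (-a)) := by
    intro y
    simp only [secondDiff]
    ring
  simp only [fracOp, this]
  rw [integral_add h1 (h2.const_mul r), integral_const_mul]
  ring

theorem timeDeriv_add_const_mul {φ ψ : Spacetime n → ℝ} (hφ : IsTest φ) (hψ : IsTest ψ) (r : ℝ)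
    (p : Spacetime n) :
    timeDeriv (fun q => φ q + r * ψ q) p = timeDeriv φ p + r * timeDeriv ψ p := by
  have h1 : DifferentiableAt ℝ φ p := (hφ.1.differentiable (by simp)) p
  have h2 : DifferentiableAt ℝ ψ p := (hψ.1.differentiable (by simp)) p
  simp only [timeDeriv]
  rw [fderiv_fun_add h1 (h2.const_mul r), fderiv_const_mul h2]
  simp

theorem integrable_mul_secondDiff [NeZero n] {a : ℝ} (ha : (n : ℝ) < a) (ha' : a < n + 2)
    {u φ : Spacetime n → ℝ} (hu : Integrable u) (hφ : IsTest φ) :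
    Integrable (Function.uncurry fun (z : Spacetime n) (y : EuclideanSpace ℝ (Fin n)) =>
      u z * (secondDiff φ z y * ‖y‖ ^ (-a))) (volume.prod volume) := by
  obtain ⟨M, -, hM⟩ := hφ.secondDiff_bound
  refine (hu.norm.mul_prod ((integrable_kernel ha ha').const_mul M)).mono' ?_
    (.of_forall fun q => ?_)
  · exact hu.aestronglyMeasurable.comp_fst.mul
      (((continuous_secondDiff hφ.continuous).measurable.mul
        ((measurable_kernel a).comp measurable_snd)).aestronglyMeasurable)
  · rw [Function.uncurry, norm_mul]
    exact mul_le_mul_of_nonneg_left (norm_secondDiff_mul_le hM a q.1 q.2) (norm_nonneg _)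

/-- Fubini's theorem for the pairing of an integrable function with a fractional Laplacian. -/
theorem integral_mul_fracOp [NeZero n] {c a : ℝ} (ha : (n : ℝ) < a) (ha' : a < n + 2)
    {u φ : Spacetime n → ℝ} (hu : Integrable u) (hφ : IsTest φ) :
    ∫ z, u z * fracOp c a φ z = c / 2 * ∫ y : EuclideanSpace ℝ (Fin n),
      (∫ z, u z * secondDiff φ z y) * ‖y‖ ^ (-a) := by
  have h1 : ∀ z, u z * fracOp c a φ z =
      c / 2 * ∫ y : EuclideanSpace ℝ (Fin n), u z * (secondDiff φ z y * ‖y‖ ^ (-a)) := by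
    intro z
    rw [integral_const_mul, fracOp]
    ring
  simp only [h1]
  rw [integral_const_mul, integral_integral_swap (integrable_mul_secondDiff ha ha' hu hφ)]
  congr 1
  refine integral_congr_ae (.of_forall fun y => ?_)
  simp only [← mul_assoc]
  rw [integral_mul_const]

theorem integrableOn_kernel [NeZero n] {a : ℝ} (ha : (n : ℝ) < a) (ha' : a < n + 2) {ρ : ℝ}
    (hρ : 0 < ρ) :
    IntegrableOn (fun y : EuclideanSpace ℝ (Fin n) => ‖y‖ ^ (-a)) {y | ρ ≤ ‖y‖} := by
  have hm : 0 < min (ρ ^ 2) 1 := by positivity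
  have hS : MeasurableSet {y : EuclideanSpace ℝ (Fin n) | ρ ≤ ‖y‖} :=
    measurableSet_le measurable_const measurable_norm
  refine ((integrable_kernel ha ha').integrableOn.const_mul (min (ρ ^ 2) 1)⁻¹).mono'
    (measurable_kernel a).aestronglyMeasurable ?_
  filter_upwards [ae_restrict_mem hS] with y hy
  have hy' : ρ ≤ ‖y‖ := hy
  have h0 : 0 ≤ ‖y‖ ^ (-a) := by positivity
  rw [Real.norm_of_nonneg h0, ← mul_assoc, ← div_eq_inv_mul]
  refine le_mul_of_one_le_left h0 ((one_le_div hm).2 ?_)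
  exact min_le_min_right _ (by gcongr)

/-- The principal value defining the fractional Laplacian of a test function exists and agrees with
the absolutely convergent form. -/
theorem IsTest.hasFracLap [NeZero n] {s : ℝ} (hs : s ∈ Ioo (0 : ℝ) 1) {φ : Spacetime n → ℝ}
    (hφ : IsTest φ) (x : EuclideanSpace ℝ (Fin n)) (t : ℝ) :
    HasFracLap n s (fun y => φ (y, t)) x (fracOp (fracC n s) (n + 2 * s) φ (x, t)) := by
  set a : ℝ := n + 2 * s with ha_def
  have ha : (n : ℝ) < a := by linarith [hs.1]
  have ha' : a < n + 2 := by linarith [hs.2]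
  obtain ⟨A, hA⟩ := hφ.2.exists_bound_of_continuous hφ.continuous
  have hS : ∀ ρ : ℝ, MeasurableSet {y : EuclideanSpace ℝ (Fin n) | ρ ≤ ‖y‖} := fun ρ =>
    measurableSet_le measurable_const measurable_norm
  set F : EuclideanSpace ℝ (Fin n) → ℝ := fun y => secondDiff φ (x, t) y * ‖y‖ ^ (-a) with hF
  have hFint : Integrable F := hφ.integrable_secondDiff ha ha' (x, t)
  have key : ∀ ρ : ℝ, 0 < ρ → ∫ y in {y : EuclideanSpace ℝ (Fin n) | ρ ≤ ‖y‖},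
      (φ (x, t) - φ (x + y, t)) / ‖y‖ ^ a = 1 / 2 * ∫ y, indicator {y | ρ ≤ ‖y‖} F y := by
    intro ρ hρ
    set g : EuclideanSpace ℝ (Fin n) → ℝ :=
      indicator {y | ρ ≤ ‖y‖} (fun y => (φ (x, t) - φ (x + y, t)) / ‖y‖ ^ a) with hg
    have hgint : Integrable g := by
      rw [hg, integrable_indicator_iff (hS ρ)]
      refine ((integrableOn_kernel ha ha' hρ).const_mul (2 * A)).mono' ?_ (.of_forall fun y => ?_)
      · have h1 : Continuous fun y : EuclideanSpace ℝ (Fin n) => φ (x, t) - φ (x + y, t) := by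
          have := hφ.continuous
          fun_prop
        exact (h1.measurable.div (by fun_prop)).aestronglyMeasurable
      · have h0 : 0 ≤ ‖y‖ ^ (-a) := by positivity
        rw [div_eq_mul_inv, ← Real.rpow_neg (norm_nonneg y), norm_mul, Real.norm_of_nonneg h0]
        refine mul_le_mul_of_nonneg_right ((norm_sub_le _ _).trans ?_) h0
        linarith [hA (x, t), hA (x + y, t)]
    have hsum : ∀ y, indicator {y | ρ ≤ ‖y‖} F y = g y + g (-y) := by
      intro y
      by_cases hy : ρ ≤ ‖y‖
      · have hy' : ρ ≤ ‖-y‖ := by rwa [norm_neg]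
        simp only [hg, hF]
        rw [indicator_of_mem (by exact hy), indicator_of_mem (by exact hy),
          indicator_of_mem (by exact hy')]
        simp only [norm_neg, div_eq_mul_inv, ← Real.rpow_neg (norm_nonneg y), secondDiff,
          Prod.mk_add_mk, Prod.neg_mk, neg_zero, add_zero, sub_eq_add_neg]
        ring
      · have hy' : ¬ ρ ≤ ‖-y‖ := by rwa [norm_neg]
        simp only [hg]
        rw [indicator_of_notMem (by exact hy), indicator_of_notMem (by exact hy),
          indicator_of_notMem (by exact hy'), add_zero]
    rw [← integral_indicator (hS ρ)]
    simp only [hsum]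
    rw [integral_add hgint hgint.comp_neg, integral_neg_eq_self]
    change ∫ y, g y = _
    ring
  have hlim : Tendsto (fun ρ : ℝ => ∫ y, indicator {y | ρ ≤ ‖y‖} F y) (𝓝[>] 0) (𝓝 (∫ y, F y)) := by
    refine tendsto_integral_filter_of_dominated_convergence (fun y => ‖F y‖)
      (.of_forall fun ρ => hFint.aestronglyMeasurable.indicator (hS ρ))
      (.of_forall fun ρ => .of_forall fun y => norm_indicator_le_norm_self _ _) hFint.norm
      (.of_forall fun y => ?_)
    rcases eq_or_ne y 0 with rfl | hy
    · have hF0 : F 0 = 0 := by simp [hF, secondDiff]; left; ring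
      refine tendsto_const_nhds.congr fun ρ => ?_
      by_cases h : (0 : EuclideanSpace ℝ (Fin n)) ∈ {y | ρ ≤ ‖y‖}
      · rw [indicator_of_mem h]
      · rw [indicator_of_notMem h, hF0]
    · refine tendsto_const_nhds.congr' ?_
      filter_upwards [Ioo_mem_nhdsGT (norm_pos_iff.2 hy)] with ρ hρ
      rw [indicator_of_mem (by exact hρ.2.le)]
  unfold HasFracLap
  have hfin := (hlim.const_mul (1 / 2)).const_mul (fracC n s)
  have heq : fracC n s * (1 / 2 * ∫ y, F y) = fracOp (fracC n s) a φ (x, t) := by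
    rw [fracOp]; ring
  rw [heq] at hfin
  refine hfin.congr' ?_
  filter_upwards [self_mem_nhdsWithin] with ρ hρ
  rw [← key ρ hρ]

theorem integrable_mul_translate {φ ψ : Spacetime n → ℝ} (hφ : IsTest φ) (hψ : IsTest ψ)
    (v : Spacetime n) : Integrable (fun z => φ z * ψ (z + v)) := by
  have h1 := hφ.continuous
  have h2 := hψ.continuous
  refine Continuous.integrable_of_hasCompactSupport (by fun_prop) hφ.2.mul_right

theorem integral_mul_secondDiff {φ ψ : Spacetime n → ℝ} (hφ : IsTest φ) (hψ : IsTest ψ)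
    (y : EuclideanSpace ℝ (Fin n)) :
    ∫ z, φ z * secondDiff ψ z y = 2 * (∫ z, φ z * ψ z) - (∫ z, φ z * ψ (z + (y, 0))) -
      ∫ z, φ z * ψ (z + (-y, 0)) := by
  have h0 := integrable_mul_translate hφ hψ 0
  simp only [add_zero] at h0
  have h1 := integrable_mul_translate hφ hψ (y, 0)
  have h2 := integrable_mul_translate hφ hψ (-y, 0)
  rw [← integral_const_mul, ← integral_sub (h0.const_mul 2) h1, ← integral_sub _ h2]
  · refine integral_congr_ae (.of_forall fun z => ?_)
    have : z - (y, 0) = z + (-y, 0) := by rw [sub_eq_add_neg]; simp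
    simp only [secondDiff, this]
    ring
  · exact (h0.const_mul 2).sub h1

theorem integral_mul_translate {φ ψ : Spacetime n → ℝ} (v : Spacetime n) :
    ∫ z, φ z * ψ (z + v) = ∫ z, ψ z * φ (z - v) := by
  rw [← integral_add_right_eq_self (fun z => ψ z * φ (z - v)) v]
  simp [mul_comm]

/-- The fractional Laplacian is symmetric on test functions. -/
theorem integral_mul_fracOp_comm [NeZero n] {c a : ℝ} (ha : (n : ℝ) < a) (ha' : a < n + 2)
    {φ ψ : Spacetime n → ℝ} (hφ : IsTest φ) (hψ : IsTest ψ) :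
    ∫ z, φ z * fracOp c a ψ z = ∫ z, ψ z * fracOp c a φ z := by
  rw [integral_mul_fracOp ha ha' hφ.integrable hψ, integral_mul_fracOp ha ha' hψ.integrable hφ]
  congr 2
  ext y
  have h1 := integral_mul_translate (φ := φ) (ψ := ψ) (y, 0)
  have h2 := integral_mul_translate (φ := φ) (ψ := ψ) (-y, 0)
  have h3 := integral_mul_translate (φ := φ) (ψ := ψ) 0
  rw [integral_mul_secondDiff hφ hψ, integral_mul_secondDiff hψ hφ, h1, h2]
  simp only [add_zero, sub_eq_add_neg, Prod.neg_mk, neg_zero, neg_neg] at h3 ⊢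
  rw [h3]
  ring

theorem integral_mul_timeDeriv {φ ψ : Spacetime n → ℝ} (hφ : IsTest φ) (hψ : IsTest ψ) :
    ∫ z, φ z * timeDeriv ψ z = - ∫ z, ψ z * timeDeriv φ z := by
  have h1 := hφ.continuous
  have h2 := hψ.continuous
  have h3 := hφ.continuous_timeDeriv
  have h4 := hψ.continuous_timeDeriv
  have key := integral_mul_fderiv_eq_neg_fderiv_mul_of_integrable (𝕜 := ℝ) (μ := volume)
    (f := φ) (g := ψ) (v := ((0, 1) : Spacetime n))
    (Continuous.integrable_of_hasCompactSupport (h3.mul h2) hψ.2.mul_left)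
    (Continuous.integrable_of_hasCompactSupport (h1.mul h4) hφ.2.mul_right)
    (Continuous.integrable_of_hasCompactSupport (h1.mul h2) hφ.2.mul_right)
    (fun x _ => hφ.1.differentiable (by simp) x)
    (fun x _ => hψ.1.differentiable (by simp) x)
  simp only [timeDeriv]
  rw [key]
  simp only [mul_comm]

theorem integral_mul_translate_le {φ : Spacetime n → ℝ} (hφ : IsTest φ) (v : Spacetime n) :
    ∫ z, φ z * φ (z + v) ≤ ∫ z, φ z * φ z := by
  have h0 := integrable_mul_translate hφ hφ 0
  simp only [add_zero] at h0
  have h1 : Integrable (fun z => φ (z + v) * φ (z + v)) := h0.comp_add_right v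
  have h2 : ∫ z, φ (z + v) * φ (z + v) = ∫ z, φ z * φ z :=
    integral_add_right_eq_self (fun z => φ z * φ z) v
  have h3 : ∫ z, φ z * φ (z + v) ≤ ∫ z, (1 / 2) * (φ z * φ z + φ (z + v) * φ (z + v)) :=
    integral_mono (integrable_mul_translate hφ hφ v) ((h0.add h1).const_mul _)
      fun z => by dsimp only; nlinarith [sq_nonneg (φ z - φ (z + v))]
  rw [integral_const_mul, integral_add h0 h1, h2] at h3
  linarith

/-- The fractional Poincaré inequality. -/
theorem exists_pos_le_integral_mul_fracOp [NeZero n] {c a : ℝ} (hc : 0 < c) (ha : (n : ℝ) < a)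
    (ha' : a < n + 2) :
    ∃ κ : ℝ, 0 < κ ∧ ∀ φ : Spacetime n → ℝ, IsTest φ → (∀ p ∉ ball (0 : Spacetime n) 2, φ p = 0) →
      κ * ∫ z, φ z * φ z ≤ ∫ z, φ z * fracOp c a φ z := by
  set S : Set (EuclideanSpace ℝ (Fin n)) := {y | 4 ≤ ‖y‖} with hS_def
  have hS : MeasurableSet S := measurableSet_le measurable_const measurable_norm
  have hk := integrableOn_kernel (n := n) ha ha' (ρ := 4) (by norm_num)
  have hpos : 0 < ∫ y in S, ‖y‖ ^ (-a) := by
    rw [setIntegral_pos_iff_support_of_nonneg_ae (.of_forall fun y => by positivity) hk]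
    have hopen : IsOpen {y : EuclideanSpace ℝ (Fin n) | 4 < ‖y‖} :=
      isOpen_lt continuous_const continuous_norm
    obtain ⟨y, hy⟩ := NormedSpace.exists_lt_norm ℝ (EuclideanSpace ℝ (Fin n)) 4
    refine (hopen.measure_pos volume ⟨y, hy⟩).trans_le (measure_mono fun z hz => ?_)
    have hz' : 4 < ‖z‖ := hz
    exact ⟨(Real.rpow_pos_of_pos (by linarith) _).ne', hz'.le⟩
  refine ⟨c * ∫ y in S, ‖y‖ ^ (-a), by positivity, fun φ hφ hsupp => ?_⟩
  set I := ∫ z, φ z * φ z with hI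
  have hJ : ∀ y, 0 ≤ ∫ z, φ z * secondDiff φ z y := by
    intro y
    rw [integral_mul_secondDiff hφ hφ]
    linarith [integral_mul_translate_le hφ (y, 0), integral_mul_translate_le hφ (-y, 0)]
  have hfar : ∀ y : EuclideanSpace ℝ (Fin n), 4 ≤ ‖y‖ → ∫ z, φ z * φ (z + (y, 0)) = 0 := by
    intro y hy
    refine integral_eq_zero_of_ae (.of_forall fun z => ?_)
    by_cases hz : z ∈ ball (0 : Spacetime n) 2
    · have : z + (y, 0) ∉ ball (0 : Spacetime n) 2 := by
        intro hzy
        rw [mem_ball_zero_iff] at hz hzy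
        have h1 := (norm_fst_le _).trans_lt hz
        have h2 := (norm_fst_le _).trans_lt hzy
        have h3 : y = (z + (y, 0)).1 - z.1 := by simp
        have h4 := norm_sub_le (z + (y, 0)).1 z.1
        rw [← h3] at h4
        linarith
      simp [hsupp _ this]
    · simp [hsupp _ hz]
  have hJfar : ∀ y ∈ S, ∫ z, φ z * secondDiff φ z y = 2 * I := by
    intro y hy
    rw [integral_mul_secondDiff hφ hφ, hfar y hy, hfar (-y) (by rw [norm_neg]; exact hy)]
    simp [hI]
  rw [integral_mul_fracOp ha ha' hφ.integrable hφ]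
  have hintg : Integrable fun y : EuclideanSpace ℝ (Fin n) =>
      (∫ z, φ z * secondDiff φ z y) * ‖y‖ ^ (-a) := by
    have := (integrable_mul_secondDiff ha ha' hφ.integrable hφ).integral_prod_right
    refine this.congr (.of_forall fun y => ?_)
    simp only [Function.uncurry, ← mul_assoc]
    rw [integral_mul_const]
  have hle := setIntegral_le_integral (s := S) hintg
    (.of_forall fun y => mul_nonneg (hJ y) (by positivity))
  have heq : ∫ y in S, (∫ z, φ z * secondDiff φ z y) * ‖y‖ ^ (-a) =
      2 * I * ∫ y in S, ‖y‖ ^ (-a) := by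
    rw [← integral_const_mul]
    exact setIntegral_congr_fun hS fun y hy => by simp only [hJfar y hy]
  rw [heq] at hle
  calc c * (∫ y in S, ‖y‖ ^ (-a)) * I = c / 2 * (2 * I * ∫ y in S, ‖y‖ ^ (-a)) := by ring
    _ ≤ _ := mul_le_mul_of_nonneg_left hle (by positivity)

/-- The fractional Laplacian at points where the function vanishes nearby. -/
theorem IsTest.fracOp_of_eq_zero [NeZero n] {c a : ℝ} (ha : (n : ℝ) < a) (ha' : a < n + 2)
    {w : Spacetime n → ℝ} (hw : IsTest w) (hw0 : ∀ q : Spacetime n, ‖q.1‖ < 2 → w q = 0)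
    {p : Spacetime n} (hp : ‖p.1‖ < 2) :
    fracOp c a w p = -c * ∫ y, w (y, p.2) * ‖y - p.1‖ ^ (-a) := by
  obtain ⟨A, hA⟩ := hw.2.exists_bound_of_continuous hw.continuous
  set g : EuclideanSpace ℝ (Fin n) → ℝ := fun y => w (p + (y, 0)) * ‖y‖ ^ (-a) with hg
  have hS : MeasurableSet {y : EuclideanSpace ℝ (Fin n) | 2 - ‖p.1‖ ≤ ‖y‖} :=
    measurableSet_le measurable_const measurable_norm
  have hgint : Integrable g := by
    have hind : g = indicator {y | 2 - ‖p.1‖ ≤ ‖y‖} g := by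
      refine (indicator_eq_self.2 fun y hy => ?_).symm
      by_contra hlt
      have hlt' : ‖y‖ < 2 - ‖p.1‖ := not_le.1 hlt
      refine hy ?_
      have : w (p + (y, 0)) = 0 := hw0 _ ((norm_add_le _ _).trans_lt (by linarith))
      simp [hg, this]
    rw [hind, integrable_indicator_iff hS]
    refine ((integrableOn_kernel ha ha' (by linarith)).const_mul A).mono' ?_
      (.of_forall fun y => ?_)
    · have h1 : Continuous fun y : EuclideanSpace ℝ (Fin n) => w (p + (y, 0)) := by
        have := hw.continuous
        fun_prop
      exact (h1.measurable.mul (measurable_kernel a)).aestronglyMeasurable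
    · have h0 : 0 ≤ ‖y‖ ^ (-a) := by positivity
      rw [norm_mul, Real.norm_of_nonneg h0]
      exact mul_le_mul_of_nonneg_right (hA _) h0
  have hsum : ∀ y, secondDiff w p y * ‖y‖ ^ (-a) = -(g y + g (-y)) := by
    intro y
    have : p - (y, 0) = p + (-y, 0) := by rw [sub_eq_add_neg]; simp
    simp only [secondDiff, hg, hw0 p hp, norm_neg, this]
    ring
  simp only [fracOp, hsum]
  rw [integral_neg, integral_add hgint hgint.comp_neg, integral_neg_eq_self,
    ← integral_add_left_eq_self (fun y => w (y, p.2) * ‖y - p.1‖ ^ (-a)) p.1]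
  have : ∀ y, w (p.1 + y, p.2) * ‖p.1 + y - p.1‖ ^ (-a) = g y := by
    intro y
    simp only [hg, add_sub_cancel_left]
    congr 2
    simp [Prod.ext_iff]
  simp only [this]
  ring

/-- Convolution of a scalar function with a vector-valued one. -/
noncomputable def mollify {F : Type*} [NormedAddCommGroup F] [NormedSpace ℝ F]
    (f : Spacetime n → ℝ) (g : Spacetime n → F) (p : Spacetime n) : F :=
  ∫ z, f z • g (p - z)

theorem hasFDerivAt_mollify {F : Type*} [NormedAddCommGroup F] [NormedSpace ℝ F]
    {f : Spacetime n → ℝ} {g : Spacetime n → F} (hf : LocallyIntegrable f) (hg : ContDiff ℝ 1 g)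
    (hcg : HasCompactSupport g) (p : Spacetime n) :
    HasFDerivAt (mollify f g) (mollify f (fderiv ℝ g) p) p :=
  hcg.hasFDerivAt_convolution_right (ContinuousLinearMap.lsmul ℝ ℝ) hf hg p

theorem norm_iteratedFDeriv_mollify_le (i : ℕ) {F : Type} [NormedAddCommGroup F] [NormedSpace ℝ F]
    {f : Spacetime n → ℝ} {g : Spacetime n → F} (hf : LocallyIntegrable f) (hg : ContDiff ℝ i g)
    (hcg : HasCompactSupport g) (p : Spacetime n) :
    ‖iteratedFDeriv ℝ i (mollify f g) p‖ ≤ ∫ z, |f z| * ‖iteratedFDeriv ℝ i g (p - z)‖ := by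
  induction i generalizing F with
  | zero =>
    simp only [norm_iteratedFDeriv_zero]
    refine (norm_integral_le_integral_norm _).trans_eq ?_
    simp only [norm_smul, Real.norm_eq_abs]
  | succ i ih =>
    have h1 : ContDiff ℝ 1 g := hg.of_le (by norm_cast; omega)
    have hfd : fderiv ℝ (mollify f g) = mollify f (fderiv ℝ g) :=
      funext fun q => (hasFDerivAt_mollify hf h1 hcg q).fderiv
    have := ih (hg.fderiv_right (m := i) (by norm_cast)) (hcg.fderiv ℝ)
    rw [← norm_iteratedFDeriv_fderiv, hfd]
    simpa only [norm_iteratedFDeriv_fderiv] using this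

/-- Mollification by an averaging kernel approximates up to the oscillation at the scale of the
kernel, for derivatives of every order. -/
theorem norm_iteratedFDeriv_mollify_sub_le (i : ℕ) {F : Type} [NormedAddCommGroup F]
    [NormedSpace ℝ F] [CompleteSpace F]
    {f : Spacetime n → ℝ} {g : Spacetime n → F} (hf : Integrable f) (hf0 : ∀ z, 0 ≤ f z)
    (hf1 : ∫ z, f z = 1) {r δ : ℝ} (hfr : ∀ z, f z ≠ 0 → ‖z‖ ≤ r)
    (hg : ContDiff ℝ i g) (hcg : HasCompactSupport g)
    (hosc : ∀ z, ‖z‖ ≤ r → ∀ p, ‖iteratedFDeriv ℝ i (fun q => g (q - z) - g q) p‖ ≤ δ)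
    (p : Spacetime n) :
    ‖iteratedFDeriv ℝ i (fun q => mollify f g q - g q) p‖ ≤ δ := by
  induction i generalizing F with
  | zero =>
    simp only [norm_iteratedFDeriv_zero] at hosc ⊢
    have hintg : Integrable fun z => f z • g (p - z) := by
      have := hcg.convolutionExists_right (ContinuousLinearMap.lsmul ℝ ℝ) hf.locallyIntegrable
        hg.continuous p
      exact this
    have h1 : mollify f g p - g p = ∫ z, f z • (g (p - z) - g p) := by
      simp only [smul_sub]
      rw [integral_sub hintg (hf.smul_const _), integral_smul_const, hf1, one_smul, mollify]
    rw [h1]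
    have h2 : ∀ z, ‖f z • (g (p - z) - g p)‖ ≤ f z * δ := by
      intro z
      rw [norm_smul, Real.norm_of_nonneg (hf0 z)]
      by_cases hz : f z = 0
      · simp [hz]
      · exact mul_le_mul_of_nonneg_left (hosc z (hfr z hz) p) (hf0 z)
    refine (norm_integral_le_of_norm_le (hf.mul_const δ) (.of_forall h2)).trans_eq ?_
    rw [integral_mul_const, hf1, one_mul]
  | succ i ih =>
    have h1 : ContDiff ℝ 1 g := hg.of_le (by norm_cast; omega)
    have hd : ∀ q, HasFDerivAt g (fderiv ℝ g q) q := fun q =>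
      (h1.differentiable one_ne_zero q).hasFDerivAt
    have hfd : fderiv ℝ (fun q => mollify f g q - g q) =
        fun q => mollify f (fderiv ℝ g) q - fderiv ℝ g q :=
      funext fun q => ((hasFDerivAt_mollify hf.locallyIntegrable h1 hcg q).sub (hd q)).fderiv
    have hfd' : ∀ z, fderiv ℝ (fun q => g (q - z) - g q) =
        fun q => fderiv ℝ g (q - z) - fderiv ℝ g q := fun z =>
      funext fun q => by
        have hz : HasFDerivAt (fun q => g (q - z)) (fderiv ℝ g (q - z)) q :=
          (hd (q - z)).comp q ((hasFDerivAt_id q).sub_const z)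
        exact (hz.sub (hd q)).fderiv
    rw [← norm_iteratedFDeriv_fderiv, hfd]
    refine ih (hg.fderiv_right (m := i) (by norm_cast)) (hcg.fderiv ℝ) fun z hz p => ?_
    rw [← hfd', norm_iteratedFDeriv_fderiv]
    exact hosc z hz p

theorem mollify_comm (f g : Spacetime n → ℝ) : mollify f g = mollify g f := by
  ext p
  simp only [mollify, smul_eq_mul]
  rw [← integral_sub_left_eq_self (fun z => f z * g (p - z)) volume p]
  simp [mul_comm]

theorem isTest_mollify {u φ : Spacetime n → ℝ} (hu : Integrable u) (hcu : HasCompactSupport u)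
    (hφ : IsTest φ) : IsTest (mollify u φ) :=
  ⟨hφ.2.contDiff_convolution_right (n := ⊤) (ContinuousLinearMap.lsmul ℝ ℝ) hu.locallyIntegrable
    hφ.1, hcu.convolution (ContinuousLinearMap.lsmul ℝ ℝ) hφ.2⟩

theorem integrable_mul_isTest {u φ : Spacetime n → ℝ} (hu : Integrable u) (hφ : IsTest φ) :
    Integrable (fun z => u z * φ z) := by
  obtain ⟨A, hA⟩ := hφ.2.exists_bound_of_continuous hφ.continuous
  exact hu.mul_bdd hφ.continuous.aestronglyMeasurable (.of_forall hA)

theorem fracOp_mollify [NeZero n] {c a : ℝ} (ha : (n : ℝ) < a) (ha' : a < n + 2)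
    {u φ : Spacetime n → ℝ} (hu : Integrable u) (hφ : IsTest φ) (p : Spacetime n) :
    fracOp c a (mollify u φ) p = ∫ z, u z * fracOp c a (fun z => φ (p - z)) z := by
  rw [integral_mul_fracOp ha ha' hu (hφ.reflect p), fracOp]
  congr 2
  ext y
  congr 1
  have hi : ∀ q, Integrable fun z => u z * φ (q - z) := fun q =>
    integrable_mul_isTest hu (hφ.reflect q)
  simp only [secondDiff, mollify, smul_eq_mul]
  rw [← integral_const_mul, ← integral_sub ((hi p).const_mul 2) (hi _), ← integral_sub _ (hi _)]
  · refine integral_congr_ae (.of_forall fun z => ?_)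
    have h1 : p + (y, 0) - z = p - (z - (y, 0)) := by abel
    have h2 : p - (y, 0) - z = p - (z + (y, 0)) := by abel
    simp only [h1, h2]
    ring
  · exact ((hi p).const_mul 2).sub (hi _)

theorem timeDeriv_mollify {u φ : Spacetime n → ℝ} (hu : Integrable u) (hφ : IsTest φ)
    (p : Spacetime n) :
    timeDeriv (mollify u φ) p = - ∫ z, u z * timeDeriv (fun z => φ (p - z)) z := by
  have hφ1 : ContDiff ℝ 1 φ := hφ.1.of_le (by simp)
  have hd := hasFDerivAt_mollify hu.locallyIntegrable hφ1 hφ.2 p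
  have hintg : Integrable fun z => u z • fderiv ℝ φ (p - z) :=
    (hφ.2.fderiv ℝ).convolutionExists_right (ContinuousLinearMap.lsmul ℝ ℝ) hu.locallyIntegrable
      (hφ1.continuous_fderiv one_ne_zero) p
  have hz : ∀ z, timeDeriv (fun z => φ (p - z)) z = - fderiv ℝ φ (p - z) (0, 1) := by
    intro z
    have h1 : HasFDerivAt φ (fderiv ℝ φ (p - z)) (p - z) :=
      (hφ1.differentiable one_ne_zero _).hasFDerivAt
    have h2 : HasFDerivAt (fun z : Spacetime n => p - z)
        (-ContinuousLinearMap.id ℝ (Spacetime n)) z := (hasFDerivAt_id z).const_sub p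
    have h3 : HasFDerivAt (fun z => φ (p - z))
        ((fderiv ℝ φ (p - z)).comp (-ContinuousLinearMap.id ℝ (Spacetime n))) z := h1.comp z h2
    rw [timeDeriv, h3.fderiv]
    simp
  simp only [timeDeriv] at hz ⊢
  simp only [hz]
  rw [hd.fderiv, mollify, ContinuousLinearMap.integral_apply hintg]
  simp [integral_neg]

theorem IsTest.deriv_eq_timeDeriv {φ : Spacetime n → ℝ} (hφ : IsTest φ)
    (x : EuclideanSpace ℝ (Fin n)) (t : ℝ) :
    deriv (fun τ => φ (x, τ)) t = timeDeriv φ (x, t) := by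
  have h1 : HasFDerivAt φ (fderiv ℝ φ (x, t)) (x, t) :=
    (hφ.1.differentiable (by simp) _).hasFDerivAt
  exact (h1.comp_hasDerivAt t ((hasDerivAt_const t x).prodMk (hasDerivAt_id t))).deriv

/-- The formal adjoint of the fractional heat operator. -/
noncomputable def adjointOp (c a : ℝ) (φ : Spacetime n → ℝ) (p : Spacetime n) : ℝ :=
  fracOp c a φ p - timeDeriv φ p

theorem IsTest.continuous_adjointOp [NeZero n] {c a : ℝ} (ha : (n : ℝ) < a) (ha' : a < n + 2)
    {φ : Spacetime n → ℝ} (hφ : IsTest φ) : Continuous (adjointOp c a φ) :=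
  (hφ.continuous_fracOp ha ha').sub hφ.continuous_timeDeriv

theorem adjointOp_add_const_mul [NeZero n] {c a : ℝ} (ha : (n : ℝ) < a) (ha' : a < n + 2)
    {φ ψ : Spacetime n → ℝ} (hφ : IsTest φ) (hψ : IsTest ψ) (r : ℝ) (p : Spacetime n) :
    adjointOp c a (fun q => φ q + r * ψ q) p = adjointOp c a φ p + r * adjointOp c a ψ p := by
  simp only [adjointOp, fracOp_add_const_mul ha ha' hφ hψ, timeDeriv_add_const_mul hφ hψ]
  ring

/-- Mollifying a distributional solution gives a classical solution. -/
theorem timeDeriv_mollify_add_fracOp [NeZero n] {c a : ℝ} (ha : (n : ℝ) < a) (ha' : a < n + 2)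
    {u φ : Spacetime n → ℝ} (hu : Integrable u) (hcu : HasCompactSupport u) (hφ : IsTest φ)
    {p : Spacetime n} (h : ∫ z, u z * adjointOp c a (fun z => φ (p - z)) z = 0) :
    fracOp c a (mollify u φ) p = - timeDeriv (mollify u φ) p := by
  have hr := hφ.reflect p
  have hbdd : ∀ {v : Spacetime n → ℝ}, Continuous v → Integrable fun z => u z * v z := by
    intro v hv
    have hon : IntegrableOn (fun z => u z * v z) (tsupport u) :=
      hu.integrableOn.mul_continuousOn hv.continuousOn hcu
    exact (integrableOn_iff_integrable_of_support_subset fun z hz =>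
      subset_tsupport u (left_ne_zero_of_mul hz)).1 hon
  rw [fracOp_mollify ha ha' hu hφ, timeDeriv_mollify hu hφ, neg_neg]
  simp only [adjointOp, mul_sub] at h
  rw [integral_sub (hbdd (hr.continuous_fracOp ha ha')) (hbdd hr.continuous_timeDeriv)] at h
  linarith

theorem exists_bound_annulus {F : Type*} [NormedAddCommGroup F]
    {G : EuclideanSpace ℝ (Fin n) → F} (hG : ContinuousOn G {0}ᶜ) {m : ℝ} (hm : 0 < m) (R : ℝ) :
    ∃ C, ∀ z, m ≤ ‖z‖ → ‖z‖ ≤ R → ‖G z‖ ≤ C := by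
  have hK : IsCompact (closedBall (0 : EuclideanSpace ℝ (Fin n)) R ∩ {z | m ≤ ‖z‖}) :=
    (isCompact_closedBall _ _).inter_right (isClosed_le continuous_const continuous_norm)
  obtain ⟨C, hC⟩ := hK.exists_bound_of_continuousOn (hG.mono fun z hz => by
    rw [mem_compl_iff, mem_singleton_iff]
    rintro rfl
    have : m ≤ ‖(0 : EuclideanSpace ℝ (Fin n))‖ := hz.2
    rw [norm_zero] at this
    linarith)
  exact ⟨C, fun z h1 h2 => hC z ⟨mem_closedBall_zero_iff.2 h2, h1⟩⟩

/-- Differentiation under the integral sign for exterior potentials. -/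
theorem integral_mul_fderiv_eq_zero {f : Spacetime n → ℝ} (hf : Integrable f)
    (hsupp : ∀ p, f p ≠ 0 → ‖p.1‖ < 2) {G : EuclideanSpace ℝ (Fin n) → ℝ} (hGm : Measurable G)
    (hG : ContDiffOn ℝ 1 G {0}ᶜ)
    (h : ∀ y : EuclideanSpace ℝ (Fin n), 2 < ‖y‖ → ∫ p, f p * G (y - p.1) = 0)
    {y : EuclideanSpace ℝ (Fin n)} (hy : 2 < ‖y‖) (v : EuclideanSpace ℝ (Fin n)) :
    Integrable (fun p => f p * fderiv ℝ G (y - p.1) v) ∧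
      ∫ p, f p * fderiv ℝ G (y - p.1) v = 0 := by
  set m := (‖y‖ - 2) / 2 with hm_def
  have hm : 0 < m := by rw [hm_def]; linarith
  set δ := m / (‖v‖ + 1) with hδ_def
  have hv : 0 < ‖v‖ + 1 := by positivity
  have hδ : 0 < δ := by positivity
  have hδv : ∀ τ ∈ ball (0 : ℝ) δ, ‖τ • v‖ ≤ m := by
    intro τ hτ
    rw [mem_ball_zero_iff] at hτ
    rw [norm_smul]
    calc ‖τ‖ * ‖v‖ ≤ δ * (‖v‖ + 1) := by gcongr; linarith
      _ = m := by rw [hδ_def]; field_simp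
  have hfar : ∀ τ ∈ ball (0 : ℝ) δ, ∀ x : EuclideanSpace ℝ (Fin n), ‖x‖ < 2 →
      m ≤ ‖y + τ • v - x‖ ∧ ‖y + τ • v - x‖ ≤ ‖y‖ + m + 2 := by
    intro τ hτ x hx
    have h1 := hδv τ hτ
    have h2 : ‖y‖ ≤ ‖y + τ • v - x‖ + ‖τ • v‖ + ‖x‖ := by
      calc ‖y‖ = ‖(y + τ • v - x) - τ • v + x‖ := by congr 1; abel
        _ ≤ _ := (norm_add_le _ _).trans (by gcongr; exact norm_sub_le _ _)
    have h3 : ‖y + τ • v - x‖ ≤ ‖y‖ + ‖τ • v‖ + ‖x‖ :=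
      (norm_sub_le _ _).trans (by gcongr; exact norm_add_le _ _)
    constructor <;> linarith
  have hopen : IsOpen ({0}ᶜ : Set (EuclideanSpace ℝ (Fin n))) := isOpen_compl_singleton
  obtain ⟨C, hC⟩ := exists_bound_annulus hG.continuousOn hm (‖y‖ + m + 2)
  obtain ⟨C', hC'⟩ := exists_bound_annulus (hG.continuousOn_fderiv_of_isOpen hopen le_rfl) hm
    (‖y‖ + m + 2)
  have hmeas : ∀ τ : ℝ, AEStronglyMeasurable (fun p => f p * G (y + τ • v - p.1)) :=
    fun τ => hf.aestronglyMeasurable.mul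
      (hGm.comp (measurable_const.sub measurable_fst)).aestronglyMeasurable
  have key := hasDerivAt_integral_of_dominated_loc_of_deriv_le (μ := volume) (x₀ := (0 : ℝ))
    (s := ball 0 δ) (F := fun (τ : ℝ) (p : Spacetime n) => f p * G (y + τ • v - p.1))
    (F' := fun τ p => f p * fderiv ℝ G (y + τ • v - p.1) v)
    (bound := fun p => ‖f p‖ * (C' * ‖v‖)) (ball_mem_nhds _ hδ) (.of_forall hmeas) ?_ ?_ ?_ ?_ ?_
  · simp only [zero_smul, add_zero] at key
    refine ⟨key.1, ?_⟩
    refine key.2.unique ((hasDerivAt_const (0 : ℝ) (0 : ℝ)).congr_of_eventuallyEq ?_)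
    filter_upwards [ball_mem_nhds (0 : ℝ) hδ] with τ hτ
    refine h _ ?_
    have h1 := hδv τ hτ
    have h2 : ‖y‖ ≤ ‖y + τ • v‖ + ‖τ • v‖ := by
      calc ‖y‖ = ‖(y + τ • v) - τ • v‖ := by congr 1; abel
        _ ≤ _ := norm_sub_le _ _
    linarith
  · refine (hf.norm.mul_const C).mono' (hmeas 0) (.of_forall fun p => ?_)
    rw [norm_mul]
    by_cases hp : f p = 0
    · simp [hp]
    · obtain ⟨h1, h2⟩ := hfar 0 (mem_ball_self hδ) p.1 (hsupp p hp)
      exact mul_le_mul_of_nonneg_left (hC _ h1 h2) (norm_nonneg _)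
  · exact hf.aestronglyMeasurable.mul ((measurable_fderiv_apply_const ℝ G v).comp
      (measurable_const.sub measurable_fst)).aestronglyMeasurable
  · refine .of_forall fun p τ hτ => ?_
    rw [norm_mul]
    by_cases hp : f p = 0
    · simp [hp]
    · obtain ⟨h1, h2⟩ := hfar τ hτ p.1 (hsupp p hp)
      refine mul_le_mul_of_nonneg_left ?_ (norm_nonneg _)
      exact (ContinuousLinearMap.le_opNorm _ _).trans
        (mul_le_mul_of_nonneg_right (hC' _ h1 h2) (norm_nonneg _))
  · exact hf.norm.mul_const _
  · refine .of_forall fun p τ hτ => ?_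
    by_cases hp : f p = 0
    · simpa [hp] using hasDerivAt_const τ (0 : ℝ)
    · obtain ⟨h1, -⟩ := hfar τ hτ p.1 (hsupp p hp)
      have hne : y + τ • v - p.1 ≠ 0 := norm_pos_iff.1 (hm.trans_le h1)
      have hd : HasFDerivAt G (fderiv ℝ G (y + τ • v - p.1)) (y + τ • v - p.1) :=
        ((hG.contDiffAt (hopen.mem_nhds hne)).differentiableAt one_ne_zero).hasFDerivAt
      have hl : HasDerivAt (fun τ : ℝ => y + τ • v - p.1) v τ := by
        simpa using (((hasDerivAt_id τ).smul_const v).const_add y).sub_const p.1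
      exact (hd.comp_hasDerivAt τ hl).const_mul (f p)

theorem hasFDerivAt_norm_sq_rpow (e : ℝ) {z : EuclideanSpace ℝ (Fin n)} (hz : z ≠ 0) :
    HasFDerivAt (fun z : EuclideanSpace ℝ (Fin n) => (‖z‖ ^ 2) ^ e)
      ((e * (‖z‖ ^ 2) ^ (e - 1)) • (2 • innerSL ℝ z)) z := by
  have h1 := (hasStrictFDerivAt_norm_sq z).hasFDerivAt
  have h2 : ‖z‖ ^ 2 ≠ 0 := by positivity
  exact h1.rpow_const (Or.inl h2)

theorem contDiffOn_norm_sq_rpow (e : ℝ) :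
    ContDiffOn ℝ 1 (fun z : EuclideanSpace ℝ (Fin n) => (‖z‖ ^ 2) ^ e) {0}ᶜ := by
  intro z hz
  have h2 : ‖z‖ ^ 2 ≠ 0 := pow_ne_zero _ (norm_ne_zero_iff.2 hz)
  exact ((contDiff_norm_sq ℝ).contDiffAt.rpow_const_of_ne h2).contDiffWithinAt

/-- Applying the Laplacian to an exterior Riesz-type potential lowers its exponent. -/
theorem integral_norm_sq_rpow_sub_one {f : Spacetime n → ℝ} (hf : Integrable f)
    (hsupp : ∀ p, f p ≠ 0 → ‖p.1‖ < 2) {e : ℝ} (he : e < 0) (he' : (n : ℝ) + 2 * e < 0)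
    (h : ∀ y : EuclideanSpace ℝ (Fin n), 2 < ‖y‖ → ∫ p, f p * (‖y - p.1‖ ^ 2) ^ e = 0)
    (y : EuclideanSpace ℝ (Fin n)) (hy : 2 < ‖y‖) :
    ∫ p, f p * (‖y - p.1‖ ^ 2) ^ (e - 1) = 0 := by
  have hne : ∀ y : EuclideanSpace ℝ (Fin n), 2 < ‖y‖ → ∀ p, f p ≠ 0 → y - p.1 ≠ 0 := by
    intro y hy p hp h0
    have := hsupp p hp
    rw [← sub_eq_zero.1 h0] at this
    linarith
  have hfirst : ∀ v y : EuclideanSpace ℝ (Fin n), 2 < ‖y‖ →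
      ∫ p, f p * (inner ℝ (y - p.1) v * (‖y - p.1‖ ^ 2) ^ (e - 1)) = 0 := by
    intro v y hy
    have h1 := (integral_mul_fderiv_eq_zero hf hsupp (by fun_prop) (contDiffOn_norm_sq_rpow e)
      h hy v).2
    have h2 : ∀ p, f p * fderiv ℝ (fun z : EuclideanSpace ℝ (Fin n) => (‖z‖ ^ 2) ^ e) (y - p.1) v =
        (2 * e) * (f p * (inner ℝ (y - p.1) v * (‖y - p.1‖ ^ 2) ^ (e - 1))) := by
      intro p
      by_cases hp : f p = 0
      · simp [hp]
      · have hz := hne y hy p hp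
        generalize y - p.1 = z at hz ⊢
        rw [(hasFDerivAt_norm_sq_rpow e hz).fderiv]
        simp
        ring
    simp only [h2] at h1
    rw [integral_const_mul] at h1
    exact (mul_eq_zero.1 h1).resolve_left (by linarith)
  set b := stdOrthonormalBasis ℝ (EuclideanSpace ℝ (Fin n)) with hb
  have hGd : ∀ v : EuclideanSpace ℝ (Fin n), ContDiffOn ℝ 1
      (fun z : EuclideanSpace ℝ (Fin n) => inner ℝ z v * (‖z‖ ^ 2) ^ (e - 1)) {0}ᶜ := fun v =>
    (contDiff_id.inner ℝ contDiff_const).contDiffOn.mul (contDiffOn_norm_sq_rpow (e - 1))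
  have hsecond := fun i => integral_mul_fderiv_eq_zero hf hsupp (by fun_prop) (hGd (b i))
    (hfirst (b i)) hy (b i)
  have hsum : ∀ p, ∑ i, f p * fderiv ℝ (fun z : EuclideanSpace ℝ (Fin n) =>
      inner ℝ z (b i) * (‖z‖ ^ 2) ^ (e - 1)) (y - p.1) (b i) =
      (n + 2 * e - 2) * (f p * (‖y - p.1‖ ^ 2) ^ (e - 1)) := by
    intro p
    by_cases hp : f p = 0
    · simp [hp]
    · set z := y - p.1 with hz
      have hz0 : z ≠ 0 := hne y hy p hp
      have hzp : 0 < ‖z‖ ^ 2 := by positivity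
      have hder : ∀ i, fderiv ℝ (fun z : EuclideanSpace ℝ (Fin n) =>
          inner ℝ z (b i) * (‖z‖ ^ 2) ^ (e - 1)) z (b i) =
          (‖z‖ ^ 2) ^ (e - 1) + 2 * (e - 1) * (‖z‖ ^ 2) ^ (e - 1 - 1) * (inner ℝ z (b i)) ^ 2 := by
        intro i
        have h1 : HasFDerivAt (fun z : EuclideanSpace ℝ (Fin n) => inner ℝ z (b i))
            (innerSL ℝ (b i)) z := by
          have : (fun z : EuclideanSpace ℝ (Fin n) => inner ℝ z (b i)) = innerSL ℝ (b i) := by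
            ext z; simp [real_inner_comm]
          rw [this]
          exact (innerSL ℝ (b i)).hasFDerivAt
        clear_value z
        rw [(h1.fun_mul (hasFDerivAt_norm_sq_rpow (e - 1) hz0)).fderiv]
        simp
        ring
      have hpars : ∑ i, (inner ℝ z (b i)) ^ 2 = ‖z‖ ^ 2 := by
        have := b.sum_sq_norm_inner_left z
        simpa using this
      simp only [hder]
      rw [← Finset.mul_sum, Finset.sum_add_distrib, ← Finset.mul_sum, hpars,
        Real.rpow_sub_one hzp.ne' (e - 1)]
      simp
      field_simp
      ring
  have h1 : ∫ p, (n + 2 * e - 2) * (f p * (‖y - p.1‖ ^ 2) ^ (e - 1)) = 0 := by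
    simp only [← hsum]
    rw [integral_finsetSum _ fun i _ => (hsecond i).1]
    exact Finset.sum_eq_zero fun i _ => (hsecond i).2
  rw [integral_const_mul] at h1
  exact (mul_eq_zero.1 h1).resolve_left (by linarith)

theorem integral_norm_sq_rpow_sub_nat {f : Spacetime n → ℝ} (hf : Integrable f)
    (hsupp : ∀ p, f p ≠ 0 → ‖p.1‖ < 2) {e : ℝ} (he : e < 0) (he' : (n : ℝ) + 2 * e < 0)
    (h : ∀ y : EuclideanSpace ℝ (Fin n), 2 < ‖y‖ → ∫ p, f p * (‖y - p.1‖ ^ 2) ^ e = 0) (N : ℕ) :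
    ∀ y : EuclideanSpace ℝ (Fin n), 2 < ‖y‖ → ∫ p, f p * (‖y - p.1‖ ^ 2) ^ (e - N) = 0 := by
  induction N with
  | zero => simpa using h
  | succ N ih =>
    have hN : (0 : ℝ) ≤ N := N.cast_nonneg
    intro y hy
    have := integral_norm_sq_rpow_sub_one hf hsupp (by linarith) (by linarith) ih y hy
    rw [← this]
    push_cast
    simp only [sub_sub]

theorem tendsto_one_add_rpow_sub_nat {g : ℕ → ℝ} {L : ℝ} (e : ℝ)
    (hg : Tendsto (fun N : ℕ => N * g N) atTop (𝓝 L)) :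
    Tendsto (fun N : ℕ => (1 + g N) ^ (e - N)) atTop (𝓝 (Real.exp (-L))) := by
  have hg0 : Tendsto g atTop (𝓝 0) := by
    have h := (tendsto_inv_atTop_nhds_zero_nat (𝕜 := ℝ)).mul hg
    rw [zero_mul] at h
    refine h.congr' ?_
    filter_upwards [eventually_gt_atTop 0] with N hN
    field_simp
  have h1 : Tendsto (fun N => 1 + g N) atTop (𝓝 1) := by simpa using hg0.const_add 1
  have h2 := h1.rpow_const (p := e) (Or.inl one_ne_zero)
  have h3 := h2.div (Real.tendsto_one_add_pow_exp_of_tendsto hg) (Real.exp_pos L).ne'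
  rw [Real.one_rpow, one_div, ← Real.exp_neg] at h3
  refine h3.congr' ?_
  filter_upwards [h1.eventually (lt_mem_nhds one_pos)] with N hN
  exact (Real.rpow_sub_natCast hN.ne' e N).symm

theorem exists_seq_tendsto_inversion [NeZero n] (η : EuclideanSpace ℝ (Fin n)) :
    ∃ y : ℕ → EuclideanSpace ℝ (Fin n), Tendsto (fun N => ‖y N‖) atTop atTop ∧
      Tendsto (fun N : ℕ => (N * (2 / ‖y N‖ ^ 2)) • y N) atTop (𝓝 η) := by
  by_cases hη : η = 0
  · subst hη
    obtain ⟨ν, hν⟩ := exists_norm_eq (EuclideanSpace ℝ (Fin n)) zero_le_one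
    have hy : ∀ N : ℕ, ‖((N : ℝ) ^ 2) • ν‖ = (N : ℝ) ^ 2 := fun N => by
      rw [norm_smul, hν, mul_one, Real.norm_of_nonneg (by positivity)]
    refine ⟨fun N => ((N : ℝ) ^ 2) • ν, ?_, ?_⟩
    · simp only [hy]
      exact (tendsto_pow_atTop two_ne_zero).comp tendsto_natCast_atTop_atTop
    · rw [tendsto_zero_iff_norm_tendsto_zero]
      have h := (tendsto_inv_atTop_nhds_zero_nat (𝕜 := ℝ)).const_mul 2
      rw [mul_zero] at h
      refine h.congr' ?_
      filter_upwards [eventually_gt_atTop 0] with N hN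
      rw [norm_smul, hy, Real.norm_of_nonneg (by positivity)]
      field_simp
  · have hη' : 0 < ‖η‖ := norm_pos_iff.2 hη
    have hy : ∀ N : ℕ, ‖(N * (2 / ‖η‖ ^ 2) : ℝ) • η‖ = N * (2 / ‖η‖) := fun N => by
      rw [norm_smul, Real.norm_of_nonneg (by positivity)]
      field_simp
    refine ⟨fun N => (N * (2 / ‖η‖ ^ 2) : ℝ) • η, ?_, ?_⟩
    · simp only [hy]
      exact tendsto_natCast_atTop_atTop.atTop_mul_const (by positivity)
    · refine tendsto_const_nhds.congr' ?_
      filter_upwards [eventually_gt_atTop 0] with N hN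
      rw [hy, smul_smul]
      have : (N * (2 / (N * (2 / ‖η‖)) ^ 2) * (N * (2 / ‖η‖ ^ 2)) : ℝ) = 1 := by field_simp
      rw [this, one_smul]

/-- A density supported in `‖x‖ < 2` whose Riesz-type potential vanishes outside has vanishing
Laplace transform in `x`. -/
theorem integral_mul_exp_inner_eq_zero [NeZero n] {f : Spacetime n → ℝ} (hf : Integrable f)
    (hsupp : ∀ p, f p ≠ 0 → ‖p.1‖ < 2) {e : ℝ} (he : e < 0) (he' : (n : ℝ) + 2 * e < 0)
    (h : ∀ y : EuclideanSpace ℝ (Fin n), 2 < ‖y‖ → ∫ p, f p * (‖y - p.1‖ ^ 2) ^ e = 0)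
    (η : EuclideanSpace ℝ (Fin n)) : ∫ p, f p * Real.exp (inner ℝ η p.1) = 0 := by
  obtain ⟨y, hy, hyη⟩ := exists_seq_tendsto_inversion η
  have hpos : ∀ᶠ N in atTop, 2 < ‖y N‖ := hy.eventually_gt_atTop 2
  have hinv : Tendsto (fun N => ‖y N‖⁻¹) atTop (𝓝 0) := hy.inv_tendsto_atTop
  have h1 : Tendsto (fun N : ℕ => N * (2 * ‖y N‖⁻¹)) atTop (𝓝 ‖η‖) := by
    refine hyη.norm.congr' ?_
    filter_upwards [hpos] with N hN
    have : 0 < ‖y N‖ := by linarith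
    rw [norm_smul, Real.norm_of_nonneg (by positivity)]
    field_simp
  have h2 : Tendsto (fun N : ℕ => N * (‖y N‖ ^ 2)⁻¹) atTop (𝓝 0) := by
    have := (h1.mul hinv).div_const 2
    rw [mul_zero, zero_div] at this
    refine this.congr fun N => ?_
    rw [← inv_pow]
    ring
  have hγ : Tendsto (fun N : ℕ => (1 + -(4 * (‖y N‖ ^ 2)⁻¹ + 4 * ‖y N‖⁻¹)) ^ (e - N)) atTop
      (𝓝 (Real.exp (2 * ‖η‖))) := by
    have := tendsto_one_add_rpow_sub_nat (L := -(2 * ‖η‖))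
      (g := fun N => -(4 * (‖y N‖ ^ 2)⁻¹ + 4 * ‖y N‖⁻¹)) e ?_
    · simpa using this
    · have := ((h2.const_mul 4).add (h1.const_mul 2)).neg
      rw [mul_zero, zero_add] at this
      exact this.congr fun N => by ring
  have hγ0 : Tendsto (fun N : ℕ => 1 + -(4 * (‖y N‖ ^ 2)⁻¹ + 4 * ‖y N‖⁻¹)) atTop (𝓝 1) := by
    have := (((hinv.pow 2).const_mul 4).add (hinv.const_mul 4)).neg.const_add 1
    simpa using this
  have hexpand : ∀ N, 2 < ‖y N‖ → ∀ x : EuclideanSpace ℝ (Fin n),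
      ‖y N - x‖ ^ 2 / ‖y N‖ ^ 2 =
        1 + (‖x‖ ^ 2 * (‖y N‖ ^ 2)⁻¹ - 2 * inner ℝ (y N) x * (‖y N‖ ^ 2)⁻¹) := by
    intro N hN x
    have : 0 < ‖y N‖ := by linarith
    rw [norm_sub_sq_real]
    field_simp
    ring
  have hlim := tendsto_integral_filter_of_dominated_convergence (l := atTop) (μ := volume)
    (F := fun (N : ℕ) (p : Spacetime n) => f p * (‖y N - p.1‖ ^ 2 / ‖y N‖ ^ 2) ^ (e - N))
    (f := fun p => f p * Real.exp (inner ℝ η p.1))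
    (fun p => ‖f p‖ * (Real.exp (2 * ‖η‖) + 1)) ?_ ?_ (hf.norm.mul_const _) ?_
  · refine tendsto_nhds_unique hlim (tendsto_const_nhds.congr' ?_)
    filter_upwards [hpos] with N hN
    have := integral_norm_sq_rpow_sub_nat hf hsupp he he' h N (y N) hN
    simp only [Real.div_rpow (sq_nonneg _) (sq_nonneg _), ← mul_div_assoc]
    rw [integral_div, this, zero_div]
  · refine .of_forall fun N => hf.aestronglyMeasurable.mul (Measurable.aestronglyMeasurable ?_)
    fun_prop
  · filter_upwards [hpos, hγ.eventually (gt_mem_nhds (lt_add_one _)),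
      hγ0.eventually (lt_mem_nhds one_pos)] with N hN hNγ hNpos
    refine .of_forall fun p => ?_
    by_cases hp : f p = 0
    · simp [hp]
    have hx := hsupp p hp
    rw [norm_mul]
    refine mul_le_mul_of_nonneg_left ?_ (norm_nonneg _)
    rw [Real.norm_of_nonneg (by positivity)]
    refine le_trans (Real.rpow_le_rpow_of_nonpos hNpos ?_ ?_) hNγ.le
    · rw [hexpand N hN]
      have hy0 : 0 < ‖y N‖ := by linarith
      have h3 : inner ℝ (y N) p.1 ≤ ‖y N‖ * 2 :=
        (real_inner_le_norm _ _).trans (by gcongr)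
      have h4 : 2 * inner ℝ (y N) p.1 * (‖y N‖ ^ 2)⁻¹ ≤ 4 * ‖y N‖⁻¹ := by
        calc 2 * inner ℝ (y N) p.1 * (‖y N‖ ^ 2)⁻¹ ≤ 2 * (‖y N‖ * 2) * (‖y N‖ ^ 2)⁻¹ := by gcongr
          _ = 4 * ‖y N‖⁻¹ := by field_simp; norm_num
      have h5 : 0 ≤ ‖p.1‖ ^ 2 * (‖y N‖ ^ 2)⁻¹ := by positivity
      have h6 : 0 ≤ (‖y N‖ ^ 2)⁻¹ := by positivity
      linarith
    · have : (0 : ℝ) ≤ N := N.cast_nonneg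
      linarith
  · refine .of_forall fun p => ?_
    refine Tendsto.const_mul _ ?_
    have hg : Tendsto (fun N : ℕ => (N : ℝ) *
        (‖p.1‖ ^ 2 * (‖y N‖ ^ 2)⁻¹ - 2 * inner ℝ (y N) p.1 * (‖y N‖ ^ 2)⁻¹)) atTop
        (𝓝 (- inner ℝ η p.1)) := by
      have := (h2.const_mul (‖p.1‖ ^ 2)).sub (hyη.inner (tendsto_const_nhds (x := p.1)))
      rw [mul_zero, zero_sub] at this
      refine this.congr fun N => ?_
      rw [real_inner_smul_left]
      ring
    have := tendsto_one_add_rpow_sub_nat e hg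
    rw [neg_neg] at this
    refine this.congr' ?_
    filter_upwards [hpos] with N hN
    rw [hexpand N hN]

/-- The exponential `exp (⟨η, x⟩ + τ t)` as a continuous function on a ball. -/
noncomputable def expMap (q : Spacetime n) : C(closedBall (0 : Spacetime n) 2, ℝ) where
  toFun p := Real.exp (inner ℝ q.1 p.1.1 + q.2 * p.1.2)
  continuous_toFun := by fun_prop

theorem expMap_mul (q r : Spacetime n) : expMap q * expMap r = expMap (q + r) := by
  ext p
  simp only [expMap, ContinuousMap.mul_apply, ContinuousMap.coe_mk, ← Real.exp_add, Prod.fst_add,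
    Prod.snd_add, inner_add_left]
  congr 1
  ring

theorem expMap_zero : expMap (0 : Spacetime n) = 1 := by
  ext p
  simp [expMap]

theorem separatesPoints_adjoin_expMap :
    (Algebra.adjoin ℝ (range (expMap (n := n)))).SeparatesPoints := by
  intro p q hpq
  by_contra! hcon
  have h : ∀ r : Spacetime n, expMap r p = expMap r q := fun r =>
    hcon _ ⟨expMap r, Algebra.subset_adjoin ⟨r, rfl⟩, rfl⟩
  refine hpq (Subtype.ext (Prod.ext ?_ ?_))
  · refine ext_inner_left ℝ fun v => ?_
    simpa [expMap] using h (v, 0)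
  · simpa [expMap] using h (0, 1)

theorem ae_eq_zero_of_integral_mul_exp {ψ : Spacetime n → ℝ} (hψ : Integrable ψ)
    (hsupp : ∀ p ∉ ball (0 : Spacetime n) 2, ψ p = 0)
    (h : ∀ q : Spacetime n, ∫ p, ψ p * Real.exp (inner ℝ q.1 p.1 + q.2 * p.2) = 0) :
    ψ =ᵐ[volume] 0 := by
  set K := closedBall (0 : Spacetime n) 2 with hK
  have hKm : MeasurableSet K := isClosed_closedBall.measurableSet
  set μ : Measure K := volume.comap Subtype.val with hμ
  have hψK : Integrable (fun p : K => ψ p) μ :=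
    (integrableOn_iff_comap_subtypeVal hKm).1 hψ.integrableOn
  have hrestr : ∀ g : Spacetime n → ℝ, ∫ p : K, ψ p * g p ∂μ = ∫ p, ψ p * g p := by
    intro g
    rw [hμ, integral_subtype_comap hKm fun p => ψ p * g p]
    refine setIntegral_eq_integral_of_forall_compl_eq_zero fun p hp => ?_
    rw [hsupp p fun hp' => hp (ball_subset_closedBall hp'), zero_mul]
  have hintg : ∀ g : C(K, ℝ), Integrable (fun p : K => ψ p * g p) μ := fun g =>
    hψK.mul_bdd (c := ‖g‖) g.continuous.aestronglyMeasurable (.of_forall g.norm_coe_le_norm)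
  have hadj : ∀ g ∈ Algebra.adjoin ℝ (range (expMap (n := n))), ∫ p : K, ψ p * g p ∂μ = 0 := by
    intro g hg
    rw [← Subalgebra.mem_toSubmodule, Algebra.adjoin_eq_span] at hg
    induction hg using Submodule.span_induction with
    | mem g hg =>
      have hrange : g ∈ range (expMap (n := n)) := by
        induction hg using Submonoid.closure_induction with
        | mem g hg => exact hg
        | one => exact ⟨0, expMap_zero⟩
        | mul g g' _ _ ih ih' =>
          obtain ⟨q, rfl⟩ := ih
          obtain ⟨r, rfl⟩ := ih'
          exact ⟨q + r, (expMap_mul q r).symm⟩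
      obtain ⟨q, rfl⟩ := hrange
      exact (hrestr fun p => Real.exp (inner ℝ q.1 p.1 + q.2 * p.2)).trans (h q)
    | zero => simp
    | add g g' _ _ ih ih' =>
      simp only [ContinuousMap.add_apply, mul_add]
      rw [integral_add (hintg g) (hintg g'), ih, ih', add_zero]
    | smul r g _ ih =>
      simp only [ContinuousMap.smul_apply, smul_eq_mul, mul_left_comm]
      rw [integral_const_mul, ih, mul_zero]
  refine ae_eq_zero_of_integral_contDiff_smul_eq_zero hψ.locallyIntegrable fun g hg _ => ?_
  simp only [smul_eq_mul, mul_comm (g _)]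
  rw [← hrestr]
  set gK : C(K, ℝ) := ⟨fun p => g p, hg.continuous.comp continuous_subtype_val⟩ with hgK
  suffices hle : ∀ ε > 0, |∫ p : K, ψ p * g p ∂μ| ≤ (∫ p : K, ‖ψ p‖ ∂μ) * ε by
    have hlim : Tendsto (fun ε : ℝ => (∫ p : K, ‖ψ p‖ ∂μ) * ε) (𝓝[>] 0) (𝓝 0) := by
      have : Tendsto (fun ε : ℝ => (∫ p : K, ‖ψ p‖ ∂μ) * ε) (𝓝 0) (𝓝 0) :=
        Continuous.tendsto' (by fun_prop) _ _ (mul_zero _)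
      exact this.mono_left nhdsWithin_le_nhds
    exact abs_nonpos_iff.1 (ge_of_tendsto hlim (eventually_mem_nhdsWithin.mono hle))
  intro ε hε
  obtain ⟨⟨a, ha⟩, haε⟩ :=
    ContinuousMap.exists_mem_subalgebra_near_continuousMap_of_separatesPoints _
      separatesPoints_adjoin_expMap gK ε hε
  have h1 : ∫ p : K, ψ p * g p ∂μ = ∫ p : K, ψ p * (gK - a) p ∂μ := by
    simp only [ContinuousMap.sub_apply, mul_sub]
    rw [integral_sub (hintg gK) (hintg a), hadj a ha, sub_zero]
    rfl
  rw [h1, ← Real.norm_eq_abs, ← integral_mul_const]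
  refine norm_integral_le_of_norm_le (hψK.norm.mul_const ε) (.of_forall fun p => ?_)
  rw [norm_mul]
  refine mul_le_mul_of_nonneg_left ?_ (norm_nonneg _)
  refine ((gK - a).norm_coe_le_norm p).trans ?_
  rw [norm_sub_rev]
  exact haε.le

theorem norm_rpow_neg_le {a m : ℝ} (ha : 0 < a) (hm : 0 < m) {x y : EuclideanSpace ℝ (Fin n)}
    (hx : ‖x‖ < 2) (hy : 2 + m ≤ ‖y‖) : ‖‖y - x‖ ^ (-a)‖ ≤ m ^ (-a) := by
  rw [Real.norm_of_nonneg (by positivity)]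
  refine Real.rpow_le_rpow_of_nonpos hm ?_ (by linarith)
  have := norm_sub_norm_le y x
  linarith

/-- The exterior potential of a density supported in `‖x‖ < 2` is continuous. -/
theorem continuousOn_potential {a : ℝ} (ha : 0 < a) {f : Spacetime n → ℝ} (hf : Integrable f)
    (hsupp : ∀ p, f p ≠ 0 → ‖p.1‖ < 2) :
    ContinuousOn (fun y : EuclideanSpace ℝ (Fin n) => ∫ p, f p * ‖y - p.1‖ ^ (-a))
      {y | 2 < ‖y‖} := by
  intro y₀ hy₀
  refine ContinuousAt.continuousWithinAt ?_
  set m := (‖y₀‖ - 2) / 2 with hm_def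
  have hm : 0 < m := by rw [hm_def]; linarith [show 2 < ‖y₀‖ from hy₀]
  have hnear : ∀ᶠ y in 𝓝 y₀, 2 + m < ‖y‖ :=
    continuous_norm.continuousAt.eventually
      (lt_mem_nhds (by rw [hm_def]; linarith [show 2 < ‖y₀‖ from hy₀]))
  refine continuousAt_of_dominated (bound := fun p => ‖f p‖ * m ^ (-a)) ?_ ?_
    (hf.norm.mul_const _) ?_
  · refine .of_forall fun y => hf.aestronglyMeasurable.mul (Measurable.aestronglyMeasurable ?_)
    fun_prop
  · filter_upwards [hnear] with y hy
    refine .of_forall fun p => ?_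
    by_cases hp : f p = 0
    · simp [hp]
    rw [norm_mul]
    exact mul_le_mul_of_nonneg_left (norm_rpow_neg_le ha hm (hsupp p hp) hy.le) (norm_nonneg _)
  · refine .of_forall fun p => ?_
    by_cases hp : f p = 0
    · simpa [hp] using continuousAt_const
    have hne : ‖y₀ - p.1‖ ≠ 0 := by
      have := norm_sub_norm_le y₀ p.1
      linarith [hsupp p hp, show 2 < ‖y₀‖ from hy₀]
    exact continuousAt_const.mul (ContinuousAt.rpow_const (by fun_prop) (Or.inl hne))

/-- Unique continuation: a density supported in the ball of radius `2` which is orthogonal to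
the exterior potentials of all test functions vanishes. -/
theorem ae_eq_zero_of_integral_mul_potential [NeZero n] {a : ℝ} (ha : (n : ℝ) < a)
    {ψ : Spacetime n → ℝ} (hψ : Integrable ψ) (hsupp : ∀ p ∉ ball (0 : Spacetime n) 2, ψ p = 0)
    (h : ∀ w : Spacetime n → ℝ, IsTest w → (∀ q : Spacetime n, ‖q.1‖ < 2 → w q = 0) →
      ∫ p, ψ p * ∫ y, w (y, p.2) * ‖y - p.1‖ ^ (-a) = 0) :
    ψ =ᵐ[volume] 0 := by
  have ha0 : 0 < a := lt_of_le_of_lt n.cast_nonneg ha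
  have hball : ∀ p, ψ p ≠ 0 → ‖p.1‖ < 2 ∧ |p.2| < 2 := by
    intro p hp
    have hmem : p ∈ ball (0 : Spacetime n) 2 := by_contra fun hp' => hp (hsupp p hp')
    rw [mem_ball_zero_iff] at hmem
    exact ⟨(norm_fst_le p).trans_lt hmem, (norm_snd_le p).trans_lt hmem⟩
  refine ae_eq_zero_of_integral_mul_exp hψ hsupp fun ⟨η, τ⟩ => ?_
  set f : Spacetime n → ℝ := fun p => ψ p * Real.exp (τ * p.2) with hf_def
  have hf : Integrable f := by
    refine (hψ.norm.mul_const (Real.exp (|τ| * 2))).mono'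
      (hψ.aestronglyMeasurable.mul (Continuous.aestronglyMeasurable (by fun_prop)))
      (.of_forall fun p => ?_)
    by_cases hp : ψ p = 0
    · simp [hf_def, hp]
    rw [hf_def, norm_mul, Real.norm_of_nonneg (Real.exp_pos _).le]
    refine mul_le_mul_of_nonneg_left (Real.exp_le_exp.2 ?_) (norm_nonneg _)
    calc τ * p.2 ≤ |τ| * |p.2| := (le_abs_self _).trans (abs_mul _ _).le
      _ ≤ |τ| * 2 := by gcongr; exact (hball p hp).2.le
  have hfsupp : ∀ p, f p ≠ 0 → ‖p.1‖ < 2 := fun p hp => (hball p (left_ne_zero_of_mul hp)).1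
  have hU : IsOpen {y : EuclideanSpace ℝ (Fin n) | 2 < ‖y‖} :=
    isOpen_lt continuous_const continuous_norm
  have hcont := continuousOn_potential ha0 hf hfsupp
  have hae := hU.ae_eq_zero_of_integral_contDiff_smul_eq_zero
    (hcont.locallyIntegrableOn (μ := volume) hU.measurableSet) ?_
  · have hzero : ∀ y : EuclideanSpace ℝ (Fin n), 2 < ‖y‖ → ∫ p, f p * ‖y - p.1‖ ^ (-a) = 0 :=
      Measure.eqOn_open_of_ae_eq ((ae_restrict_iff' hU.measurableSet).2 hae) hU hcont
        continuousOn_const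
    have hrpow : ∀ z : EuclideanSpace ℝ (Fin n), (‖z‖ ^ 2) ^ (-a / 2) = ‖z‖ ^ (-a) := fun z => by
      rw [← Real.rpow_natCast, ← Real.rpow_mul (norm_nonneg _)]
      congr 1
      push_cast
      ring
    have := integral_mul_exp_inner_eq_zero hf hfsupp (e := -a / 2) (by linarith) (by linarith)
      (by simpa only [hrpow] using hzero) η
    rw [← this]
    refine integral_congr_ae (.of_forall fun p => ?_)
    simp only [hf_def, Real.exp_add]
    ring
  intro ζ hζ hζc hζU
  obtain ⟨m, hm, hζm⟩ : ∃ m, 0 < m ∧ ∀ y, ζ y ≠ 0 → 2 + m ≤ ‖y‖ := by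
    rcases (tsupport ζ).eq_empty_or_nonempty with hemp | hne
    · exact ⟨1, one_pos, fun y hy => absurd (subset_tsupport ζ hy) (by simp [hemp])⟩
    · obtain ⟨y₁, hy₁, hmin⟩ := hζc.exists_isMinOn hne continuous_norm.continuousOn
      have h2 : 2 < ‖y₁‖ := hζU hy₁
      exact ⟨‖y₁‖ - 2, by linarith, fun y hy => by
        have : ‖y₁‖ ≤ ‖y‖ := hmin (subset_tsupport ζ hy)
        linarith⟩
  have hζint : Integrable ζ := hζ.continuous.integrable_of_hasCompactSupport hζc
  have hprod : Integrable (Function.uncurry fun (y : EuclideanSpace ℝ (Fin n)) (p : Spacetime n) =>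
      ζ y * (f p * ‖y - p.1‖ ^ (-a))) (volume.prod volume) := by
    refine ((hζint.mul_prod hf).norm.mul_const (m ^ (-a))).mono' ?_ (.of_forall fun q => ?_)
    · have h1 : AEStronglyMeasurable
          (fun q : EuclideanSpace ℝ (Fin n) × Spacetime n => ‖q.1 - q.2.1‖ ^ (-a))
          (volume.prod volume) := Measurable.aestronglyMeasurable (by fun_prop)
      refine ((hζint.mul_prod hf).aestronglyMeasurable.mul h1).congr (.of_forall fun q => ?_)
      simp only [Pi.mul_apply, Function.uncurry]
      ring
    · simp only [Function.uncurry, norm_mul]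
      rw [← mul_assoc]
      by_cases hq : ζ q.1 = 0
      · simp [hq]
      by_cases hq' : f q.2 = 0
      · simp [hq']
      exact mul_le_mul_of_nonneg_left
        (norm_rpow_neg_le ha0 hm (hfsupp _ hq') (hζm _ hq)) (by positivity)
  let χ : ContDiffBump (0 : ℝ) := ⟨2, 3, by norm_num, by norm_num⟩
  set w : Spacetime n → ℝ := fun q => ζ q.1 * (Real.exp (τ * q.2) * χ q.2) with hw_def
  have hw : IsTest w := by
    refine ⟨(hζ.comp contDiff_fst).mul
      ((Real.contDiff_exp.comp (contDiff_const.mul contDiff_snd)).mul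
        (χ.contDiff.comp contDiff_snd)), ?_⟩
    refine HasCompactSupport.intro (hζc.isCompact.prod χ.hasCompactSupport.isCompact) ?_
    intro q hq
    rw [mem_prod, not_and_or] at hq
    rcases hq with hq | hq
    · simp [hw_def, image_eq_zero_of_notMem_tsupport hq]
    · simp [hw_def, image_eq_zero_of_notMem_tsupport hq]
  have hw0 : ∀ q : Spacetime n, ‖q.1‖ < 2 → w q = 0 := by
    intro q hq
    by_cases hζq : ζ q.1 = 0
    · simp [hw_def, hζq]
    · linarith [hζm _ hζq]
  have hmain := h w hw hw0
  simp only [smul_eq_mul, ← integral_const_mul]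
  rw [integral_integral_swap hprod, ← hmain]
  refine integral_congr_ae (.of_forall fun p => ?_)
  by_cases hp : ψ p = 0
  · simp [hf_def, hp]
  have hχ : χ p.2 = 1 := χ.one_of_mem_closedBall (by
    rw [mem_closedBall_zero_iff, Real.norm_eq_abs]
    exact (hball p hp).2.le)
  simp only [hf_def, hw_def, hχ, ← integral_const_mul]
  refine integral_congr_ae (.of_forall fun y => ?_)
  ring_nf

/-- Test functions vanishing outside the ball of radius `2`. -/
def IsInnerTest (φ : Spacetime n → ℝ) : Prop :=
  IsTest φ ∧ ∀ p ∉ ball (0 : Spacetime n) 2, φ p = 0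

theorem IsTest.zero : IsTest (fun _ : Spacetime n => (0 : ℝ)) :=
  ⟨contDiff_const, HasCompactSupport.zero⟩

theorem IsTest.memLp {φ : Spacetime n → ℝ} (hφ : IsTest φ) : MemLp φ 2 :=
  hφ.continuous.memLp_of_hasCompactSupport hφ.2

theorem IsInnerTest.add_const_mul {φ ψ : Spacetime n → ℝ} (hφ : IsInnerTest φ)
    (hψ : IsInnerTest ψ) (r : ℝ) : IsInnerTest (fun p => φ p + r * ψ p) :=
  ⟨hφ.1.add_const_mul hψ.1 r, fun p hp => by simp [hφ.2 p hp, hψ.2 p hp]⟩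

theorem adjointOp_zero (c a : ℝ) (p : Spacetime n) :
    adjointOp c a (fun _ : Spacetime n => (0 : ℝ)) p = 0 := by
  simp [adjointOp, fracOp, secondDiff, timeDeriv]

theorem inner_eq_integral (f g : Lp ℝ 2 (volume : Measure (Spacetime n))) :
    inner ℝ f g = ∫ p, f p * g p := by
  rw [L2.inner_def]
  refine integral_congr_ae (.of_forall fun p => ?_)
  simp [mul_comm]

theorem integrable_of_memLp_of_hasCompactSupport {u : Spacetime n → ℝ} (hu : MemLp u 2)
    (hcu : HasCompactSupport u) : Integrable u := by
  have h := (hu.mono_measure (Measure.restrict_le_self (s := tsupport u)))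
  have : IsFiniteMeasure ((volume : Measure (Spacetime n)).restrict (tsupport u)) :=
    ⟨by simpa using hcu.isCompact.measure_lt_top⟩
  exact (integrableOn_iff_integrable_of_support_subset (subset_tsupport u)).1
    (h.integrable one_le_two)

theorem integrable_mul_continuous {u g : Spacetime n → ℝ} (hu : Integrable u)
    (hcu : HasCompactSupport u) (hg : Continuous g) : Integrable (fun p => u p * g p) := by
  have h := hu.integrableOn.mul_continuousOn (K := tsupport u) hg.continuousOn hcu.isCompact
  refine (integrableOn_iff_integrable_of_support_subset ?_).1 h
  intro p hp
  exact subset_tsupport u (left_ne_zero_of_mul hp)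

/-- Weak solutions, in the ball of radius `2`, of the fractional heat equation which are square
integrable and compactly supported. -/
def IsWeakSolution (c a : ℝ) (u : Spacetime n → ℝ) : Prop :=
  MemLp u 2 ∧ HasCompactSupport u ∧ ∀ φ, IsInnerTest φ → ∫ p, u p * adjointOp c a φ p = 0

/-- The square integrable functions which agree in the ball of radius `2` with a weak solution. -/
noncomputable def weakSolutionSpace [NeZero n] {a : ℝ} (c : ℝ) (ha : (n : ℝ) < a)
    (ha' : a < n + 2) : Submodule ℝ (Lp ℝ 2 (volume : Measure (Spacetime n))) where
  carrier := {v | ∃ u, IsWeakSolution c a u ∧ ∀ᵐ p, p ∈ ball (0 : Spacetime n) 2 → v p = u p}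
  zero_mem' := by
    refine ⟨fun _ => 0, ⟨MemLp.zero', HasCompactSupport.zero, by simp⟩, ?_⟩
    filter_upwards [Lp.coeFn_zero ℝ 2 (volume : Measure (Spacetime n))] with p hp _
    exact hp
  add_mem' := by
    rintro v v' ⟨u, ⟨hu, hcu, hus⟩, huv⟩ ⟨u', ⟨hu', hcu', hus'⟩, huv'⟩
    refine ⟨fun p => u p + u' p, ⟨hu.add hu', hcu.add hcu', fun φ hφ => ?_⟩, ?_⟩
    · simp only [add_mul]
      have hcont := hφ.1.continuous_adjointOp (c := c) ha ha'
      rw [integral_add (integrable_mul_continuous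
        (integrable_of_memLp_of_hasCompactSupport hu hcu) hcu hcont) (integrable_mul_continuous
        (integrable_of_memLp_of_hasCompactSupport hu' hcu') hcu' hcont), hus φ hφ, hus' φ hφ,
        add_zero]
    · filter_upwards [Lp.coeFn_add v v', huv, huv'] with p h1 h2 h3 hp
      rw [h1, Pi.add_apply, h2 hp, h3 hp]
  smul_mem' := by
    rintro r v ⟨u, ⟨hu, hcu, hus⟩, huv⟩
    refine ⟨fun p => r * u p, ⟨hu.const_mul r, hcu.mul_left, fun φ hφ => ?_⟩, ?_⟩
    · simp only [mul_assoc]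
      rw [integral_const_mul, hus φ hφ, mul_zero]
    · filter_upwards [Lp.coeFn_smul r v, huv] with p h1 h2 hp
      rw [h1, Pi.smul_apply, h2 hp, smul_eq_mul]

/-- The range of the adjoint operator, truncated to a ball. -/
noncomputable def adjointRange [NeZero n] {a : ℝ} (c : ℝ) (ha : (n : ℝ) < a)
    (ha' : a < n + 2) (R : ℝ) : Submodule ℝ (Lp ℝ 2 (volume : Measure (Spacetime n))) where
  carrier := {v | ∃ φ, IsInnerTest φ ∧
    v =ᵐ[volume] (closedBall (0 : Spacetime n) R).indicator (adjointOp c a φ)}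
  zero_mem' := by
    refine ⟨fun _ => 0, ⟨IsTest.zero, fun _ _ => rfl⟩, ?_⟩
    filter_upwards [Lp.coeFn_zero ℝ 2 (volume : Measure (Spacetime n))] with p hp
    rw [hp]
    simp [indicator, adjointOp_zero]
  add_mem' := by
    rintro v v' ⟨φ, hφ, hv⟩ ⟨φ', hφ', hv'⟩
    refine ⟨_, hφ.add_const_mul hφ' 1, ?_⟩
    filter_upwards [Lp.coeFn_add v v', hv, hv'] with p h1 h2 h3
    rw [h1, Pi.add_apply, h2, h3]
    by_cases hp : p ∈ closedBall (0 : Spacetime n) R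
    · simp only [indicator_of_mem hp]
      rw [adjointOp_add_const_mul ha ha' hφ.1 hφ'.1, one_mul]
    · simp only [indicator_of_notMem hp, add_zero]
  smul_mem' := by
    rintro r v ⟨φ, hφ, hv⟩
    refine ⟨_, IsInnerTest.add_const_mul ⟨IsTest.zero, fun _ _ => rfl⟩ hφ r, ?_⟩
    filter_upwards [Lp.coeFn_smul r v, hv] with p h1 h2
    rw [h1, Pi.smul_apply, h2]
    by_cases hp : p ∈ closedBall (0 : Spacetime n) R
    · simp only [indicator_of_mem hp]
      rw [adjointOp_add_const_mul ha ha' IsTest.zero hφ.1, adjointOp_zero, zero_add, smul_eq_mul]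
    · simp only [indicator_of_notMem hp, smul_zero]

theorem memLp_indicator_of_continuous {g : Spacetime n → ℝ} (hg : Continuous g) (R : ℝ) :
    MemLp ((closedBall (0 : Spacetime n) R).indicator g) 2 := by
  rw [memLp_indicator_iff_restrict isClosed_closedBall.measurableSet]
  have : IsFiniteMeasure ((volume : Measure (Spacetime n)).restrict (closedBall 0 R)) :=
    ⟨by simpa using (isCompact_closedBall (0 : Spacetime n) R).measure_lt_top⟩
  obtain ⟨C, hC⟩ := (isCompact_closedBall (0 : Spacetime n) R).exists_bound_of_continuousOn
    hg.continuousOn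
  exact MemLp.of_bound hg.aestronglyMeasurable C
    ((ae_restrict_iff' isClosed_closedBall.measurableSet).2 (.of_forall hC))

theorem orthogonal_adjointRange_le [NeZero n] {c a : ℝ} (ha : (n : ℝ) < a) (ha' : a < n + 2)
    {R : ℝ} (hR : 2 ≤ R) : (adjointRange c ha ha' R)ᗮ ≤ weakSolutionSpace c ha ha' := by
  intro v hv
  refine ⟨(closedBall (0 : Spacetime n) R).indicator v,
    ⟨(Lp.memLp v).indicator isClosed_closedBall.measurableSet,
      HasCompactSupport.intro (isCompact_closedBall (0 : Spacetime n) R)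
        fun p hp => indicator_of_notMem hp _, fun φ hφ => ?_⟩, .of_forall fun p hp => ?_⟩
  · have hmem := memLp_indicator_of_continuous (hφ.1.continuous_adjointOp (c := c) ha ha') R
    have h := (Submodule.mem_orthogonal _ _).1 hv (hmem.toLp _) ⟨φ, hφ, hmem.coeFn_toLp⟩
    rw [inner_eq_integral] at h
    rw [← h]
    refine integral_congr_ae ?_
    filter_upwards [hmem.coeFn_toLp] with p hp
    rw [hp]
    by_cases hpR : p ∈ closedBall (0 : Spacetime n) R
    · simp only [indicator_of_mem hpR, mul_comm]
    · simp only [indicator_of_notMem hpR, zero_mul]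
  · rw [indicator_of_mem (ball_subset_closedBall (ball_subset_ball hR hp))]

/-- Duality between the fractional heat operator and its adjoint. -/
theorem integral_mul_add_eq_integral_mul_adjointOp [NeZero n] {c a : ℝ} (ha : (n : ℝ) < a)
    (ha' : a < n + 2) {φ w : Spacetime n → ℝ} (hφ : IsTest φ) (hw : IsTest w) :
    ∫ p, φ p * (fracOp c a w p + timeDeriv w p) = ∫ p, w p * adjointOp c a φ p := by
  have h1 := integrable_mul_continuous hφ.integrable hφ.2 (hw.continuous_fracOp (c := c) ha ha')
  have h2 := integrable_mul_continuous hφ.integrable hφ.2 hw.continuous_timeDeriv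
  have h3 := integrable_mul_continuous hw.integrable hw.2 (hφ.continuous_fracOp (c := c) ha ha')
  have h4 := integrable_mul_continuous hw.integrable hw.2 hφ.continuous_timeDeriv
  simp only [adjointOp, mul_add, mul_sub]
  rw [integral_add h1 h2, integral_sub h3 h4, integral_mul_fracOp_comm ha ha' hφ hw,
    integral_mul_timeDeriv hφ hw, sub_eq_add_neg]

/-- Coercivity of the adjoint operator on test functions supported in the ball. -/
theorem exists_pos_mul_norm_le [NeZero n] {c a : ℝ} (hc : 0 < c) (ha : (n : ℝ) < a)
    (ha' : a < n + 2) : ∃ κ : ℝ, 0 < κ ∧ ∀ (Φ v : Lp ℝ 2 (volume : Measure (Spacetime n)))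
      (φ : Spacetime n → ℝ), IsInnerTest φ → Φ =ᵐ[volume] φ →
      (∀ᵐ p, p ∈ ball (0 : Spacetime n) 2 → v p = adjointOp c a φ p) → κ * ‖Φ‖ ≤ ‖v‖ := by
  obtain ⟨κ, hκ, h⟩ := exists_pos_le_integral_mul_fracOp (n := n) hc ha ha'
  refine ⟨κ, hκ, fun Φ v φ hφ hΦ hv => ?_⟩
  have h1 : ‖Φ‖ * ‖Φ‖ = ∫ z, φ z * φ z := by
    rw [← real_inner_self_eq_norm_mul_norm, inner_eq_integral]
    refine integral_congr_ae ?_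
    filter_upwards [hΦ] with p hp
    rw [hp]
  have h2 : ∫ z, φ z * fracOp c a φ z = inner ℝ Φ v := by
    have ht : ∫ z, φ z * timeDeriv φ z = 0 := by
      have := integral_mul_timeDeriv hφ.1 hφ.1
      linarith
    have hadj : ∫ z, φ z * adjointOp c a φ z = ∫ z, φ z * fracOp c a φ z := by
      simp only [adjointOp, mul_sub]
      rw [integral_sub (integrable_mul_continuous hφ.1.integrable hφ.1.2
        (hφ.1.continuous_fracOp ha ha')) (integrable_mul_continuous hφ.1.integrable hφ.1.2
        hφ.1.continuous_timeDeriv), ht, sub_zero]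
    rw [← hadj, inner_eq_integral]
    refine integral_congr_ae ?_
    filter_upwards [hΦ, hv] with p hp hp'
    by_cases hpQ : p ∈ ball (0 : Spacetime n) 2
    · rw [hp, hp' hpQ]
    · rw [hp, hφ.2 p hpQ, zero_mul, zero_mul]
  have h3 := h φ hφ.1 hφ.2
  rw [← h1, h2] at h3
  have h4 := h3.trans (real_inner_le_norm Φ v)
  rcases (norm_nonneg Φ).eq_or_lt with h0 | h0
  · rw [← h0, mul_zero]
    exact norm_nonneg v
  · refine le_of_mul_le_mul_right ?_ h0
    linarith

/-- An element orthogonal to all weak solutions is represented by a function supported in the ball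
which solves the adjoint equation weakly. -/
theorem exists_adjoint_solution [NeZero n] {c a : ℝ} (hc : 0 < c) (ha : (n : ℝ) < a)
    (ha' : a < n + 2) {h : Lp ℝ 2 (volume : Measure (Spacetime n))}
    (hh : h ∈ (weakSolutionSpace c ha ha')ᗮ) :
    ∃ ψ : Spacetime n → ℝ, Integrable ψ ∧ (∀ p ∉ ball (0 : Spacetime n) 2, ψ p = 0) ∧
      ∀ w, IsTest w → ∫ p, ψ p * (fracOp c a w p + timeDeriv w p) = ∫ p, w p * h p := by
  have hR : ∀ N : ℕ, (2 : ℝ) ≤ N + 2 := fun N => by linarith [N.cast_nonneg (α := ℝ)]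
  have happrox : ∀ N : ℕ, ∃ v ∈ adjointRange c ha ha' ((N : ℝ) + 2),
      dist h v < 1 / ((N : ℝ) + 1) := by
    intro N
    have hmem : h ∈ (adjointRange c ha ha' ((N : ℝ) + 2)).topologicalClosure := by
      rw [← Submodule.orthogonal_orthogonal_eq_closure]
      exact Submodule.orthogonal_le (orthogonal_adjointRange_le ha ha' (hR N)) hh
    exact Metric.mem_closure_iff.1 hmem _ (by positivity)
  choose v hv hdist using happrox
  choose φ hφ hvφ using hv
  have hvlim : Tendsto v atTop (𝓝 h) := by
    rw [tendsto_iff_dist_tendsto_zero]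
    refine squeeze_zero (fun _ => dist_nonneg) (fun N => ?_) tendsto_one_div_add_atTop_nhds_zero_nat
    rw [dist_comm]
    exact (hdist N).le
  obtain ⟨κ, hκ, hcoer⟩ := exists_pos_mul_norm_le (n := n) hc ha ha'
  set Φ : ℕ → Lp ℝ 2 (volume : Measure (Spacetime n)) := fun N => (hφ N).1.memLp.toLp (φ N)
    with hΦ_def
  have hΦ : ∀ N, Φ N =ᵐ[volume] φ N := fun N => (hφ N).1.memLp.coeFn_toLp
  have hvQ : ∀ N, ∀ᵐ p, p ∈ ball (0 : Spacetime n) 2 → v N p = adjointOp c a (φ N) p := by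
    intro N
    filter_upwards [hvφ N] with p hp hpQ
    rw [hp, indicator_of_mem (ball_subset_closedBall (ball_subset_ball (hR N) hpQ))]
  have hdiff : ∀ N M, κ * dist (Φ N) (Φ M) ≤ dist (v N) (v M) := by
    intro N M
    rw [dist_eq_norm, dist_eq_norm]
    refine hcoer _ _ _ ((hφ N).add_const_mul (hφ M) (-1)) ?_ ?_
    · filter_upwards [Lp.coeFn_sub (Φ N) (Φ M), hΦ N, hΦ M] with p h1 h2 h3
      rw [h1, Pi.sub_apply, h2, h3]
      ring
    · filter_upwards [Lp.coeFn_sub (v N) (v M), hvQ N, hvQ M] with p h1 h2 h3 hp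
      rw [h1, Pi.sub_apply, h2 hp, h3 hp, adjointOp_add_const_mul ha ha' (hφ N).1 (hφ M).1]
      ring
  have hcauchy : CauchySeq Φ := by
    rw [Metric.cauchySeq_iff']
    intro ε hε
    obtain ⟨N, hN⟩ := Metric.cauchySeq_iff'.1 hvlim.cauchySeq (κ * ε) (by positivity)
    exact ⟨N, fun M hM => lt_of_mul_lt_mul_left ((hdiff M N).trans_lt (hN M hM)) hκ.le⟩
  obtain ⟨Ψ, hΨ⟩ := cauchySeq_tendsto_of_complete hcauchy
  have hQm : MeasurableSet (ball (0 : Spacetime n) 2) := measurableSet_ball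
  refine ⟨(ball (0 : Spacetime n) 2).indicator Ψ, ?_, fun p hp => indicator_of_notMem hp _,
    fun w hw => ?_⟩
  · refine integrable_of_memLp_of_hasCompactSupport ((Lp.memLp Ψ).indicator hQm) ?_
    exact HasCompactSupport.intro (isCompact_closedBall (0 : Spacetime n) 2)
      fun p hp => indicator_of_notMem (fun hp' => hp (ball_subset_closedBall hp')) _
  have hLw : Continuous (fun p => fracOp c a w p + timeDeriv w p) :=
    (hw.continuous_fracOp ha ha').add hw.continuous_timeDeriv
  have hG : MemLp ((ball (0 : Spacetime n) 2).indicator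
      (fun p => fracOp c a w p + timeDeriv w p)) 2 := by
    have := (memLp_indicator_of_continuous hLw 2).indicator hQm
    rwa [indicator_indicator, inter_eq_left.2 ball_subset_closedBall] at this
  have hinnerG : ∀ Ξ : Lp ℝ 2 (volume : Measure (Spacetime n)), inner ℝ Ξ (hG.toLp _) =
      ∫ p, (ball (0 : Spacetime n) 2).indicator Ξ p * (fracOp c a w p + timeDeriv w p) := by
    intro Ξ
    rw [inner_eq_integral]
    refine integral_congr_ae ?_
    filter_upwards [hG.coeFn_toLp] with p hp
    rw [hp]
    by_cases hpQ : p ∈ ball (0 : Spacetime n) 2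
    · simp only [indicator_of_mem hpQ]
    · simp only [indicator_of_notMem hpQ, mul_zero, zero_mul]
  have hinnerw : ∀ Ξ : Lp ℝ 2 (volume : Measure (Spacetime n)), inner ℝ (hw.memLp.toLp w) Ξ =
      ∫ p, w p * Ξ p := by
    intro Ξ
    rw [inner_eq_integral]
    refine integral_congr_ae ?_
    filter_upwards [hw.memLp.coeFn_toLp] with p hp
    rw [hp]
  rw [← hinnerG, ← hinnerw]
  have hlim1 : Tendsto (fun N => inner ℝ (Φ N) (hG.toLp _)) atTop (𝓝 (inner ℝ Ψ (hG.toLp _))) :=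
    hΨ.inner tendsto_const_nhds
  have hlim2 : Tendsto (fun N => inner ℝ (hw.memLp.toLp w) (v N)) atTop
      (𝓝 (inner ℝ (hw.memLp.toLp w) h)) := tendsto_const_nhds.inner hvlim
  refine tendsto_nhds_unique hlim1 (hlim2.congr' ?_)
  obtain ⟨R, hR'⟩ := hw.2.isBounded.subset_closedBall (0 : Spacetime n)
  filter_upwards [eventually_ge_atTop ⌈R⌉₊] with N hN
  have hRN : R ≤ N := (Nat.le_ceil R).trans (by exact_mod_cast hN)
  rw [hinnerG, hinnerw]
  trans ∫ p, w p * adjointOp c a (φ N) p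
  · refine integral_congr_ae ?_
    filter_upwards [hvφ N] with p hp
    rw [hp]
    by_cases hpw : w p = 0
    · simp [hpw]
    · have : p ∈ closedBall (0 : Spacetime n) (N + 2) :=
        closedBall_subset_closedBall (by linarith) (hR' (subset_tsupport w hpw))
      rw [indicator_of_mem this]
  · rw [← integral_mul_add_eq_integral_mul_adjointOp ha ha' (hφ N).1 hw]
    refine integral_congr_ae ?_
    filter_upwards [hΦ N] with p hp
    by_cases hpQ : p ∈ ball (0 : Spacetime n) 2
    · rw [indicator_of_mem hpQ, hp]
    · rw [indicator_of_notMem hpQ, (hφ N).2 p hpQ]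

theorem orthogonal_weakSolutionSpace [NeZero n] {c a : ℝ} (hc : 0 < c) (ha : (n : ℝ) < a)
    (ha' : a < n + 2) : (weakSolutionSpace (n := n) c ha ha')ᗮ = ⊥ := by
  rw [Submodule.eq_bot_iff]
  intro h hh
  have hQm : MeasurableSet (ball (0 : Spacetime n) 2) := measurableSet_ball
  have hout : ∀ᵐ p, p ∉ ball (0 : Spacetime n) 2 → h p = 0 := by
    have hmem : MemLp ((ball (0 : Spacetime n) 2)ᶜ.indicator h) 2 :=
      (Lp.memLp h).indicator hQm.compl
    have hsol : hmem.toLp _ ∈ weakSolutionSpace c ha ha' := by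
      refine ⟨fun _ => 0, ⟨MemLp.zero', HasCompactSupport.zero, by simp⟩, ?_⟩
      filter_upwards [hmem.coeFn_toLp] with p hp hpQ
      rw [hp, indicator_of_notMem (not_not.2 hpQ)]
    have h0 := (Submodule.mem_orthogonal _ _).1 hh _ hsol
    have hself : inner ℝ (hmem.toLp _) (hmem.toLp _) = inner ℝ (hmem.toLp _) h := by
      rw [inner_eq_integral, inner_eq_integral]
      refine integral_congr_ae ?_
      filter_upwards [hmem.coeFn_toLp] with p hp
      rw [hp]
      by_cases hpQ : p ∈ ball (0 : Spacetime n) 2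
      · rw [indicator_of_notMem (not_not.2 hpQ), zero_mul, zero_mul]
      · rw [indicator_of_mem hpQ]
    rw [h0, inner_self_eq_zero] at hself
    filter_upwards [hmem.coeFn_toLp, Lp.coeFn_zero ℝ 2 (volume : Measure (Spacetime n))]
      with p hp hp0 hpQ
    rw [hself, hp0, indicator_of_mem hpQ] at hp
    exact hp.symm
  obtain ⟨ψ, hψ, hψ0, hψw⟩ := exists_adjoint_solution hc ha ha' hh
  have hzero : ψ =ᵐ[volume] 0 := by
    refine ae_eq_zero_of_integral_mul_potential ha hψ hψ0 fun w hw hw0 => ?_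
    have h1 : ∫ p, w p * h p = 0 := by
      refine integral_eq_zero_of_ae ?_
      filter_upwards [hout] with p hp
      by_cases hpQ : p ∈ ball (0 : Spacetime n) 2
      · rw [hw0 p ((norm_fst_le p).trans_lt (mem_ball_zero_iff.1 hpQ)), zero_mul, Pi.zero_apply]
      · rw [hp hpQ, mul_zero, Pi.zero_apply]
    have h2 : ∀ p, ψ p * (fracOp c a w p + timeDeriv w p) =
        -c * (ψ p * ∫ y, w (y, p.2) * ‖y - p.1‖ ^ (-a)) := by
      intro p
      by_cases hp : ψ p = 0
      · simp [hp]
      have hpQ : p ∈ ball (0 : Spacetime n) 2 := by_contra fun hp' => hp (hψ0 p hp')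
      have hp1 : ‖p.1‖ < 2 := (norm_fst_le p).trans_lt (mem_ball_zero_iff.1 hpQ)
      have ht : timeDeriv w p = 0 := by
        have : w =ᶠ[𝓝 p] fun _ => 0 := by
          filter_upwards [isOpen_ball.mem_nhds hpQ] with q hq
          exact hw0 q ((norm_fst_le q).trans_lt (mem_ball_zero_iff.1 hq))
        rw [timeDeriv, this.fderiv_eq]
        simp
      rw [hw.fracOp_of_eq_zero ha ha' hw0 hp1, ht]
      ring
    have h3 := hψw w hw
    simp only [h2] at h3
    rw [integral_const_mul, h1] at h3
    exact (mul_eq_zero.1 h3).resolve_left (by linarith)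
  have hae : ∀ᵐ p, h p = 0 := by
    refine ae_eq_zero_of_integral_contDiff_smul_eq_zero
      ((Lp.memLp h).locallyIntegrable one_le_two) fun w hw hcw => ?_
    simp only [smul_eq_mul]
    rw [← hψw w ⟨hw, hcw⟩]
    refine integral_eq_zero_of_ae ?_
    filter_upwards [hzero] with p hp
    simp [hp]
  exact (Lp.eq_zero_iff_ae_eq_zero).2 hae

/-- Weak solutions are dense, in the mean, among square integrable functions on the ball. -/
theorem exists_isWeakSolution_integral_le [NeZero n] {c a : ℝ} (hc : 0 < c) (ha : (n : ℝ) < a)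
    (ha' : a < n + 2) {g : Spacetime n → ℝ} (hg : MemLp g 2) {δ : ℝ} (hδ : 0 < δ) :
    ∃ u, IsWeakSolution c a u ∧ ∫ p in ball (0 : Spacetime n) 2, |u p - g p| ≤ δ := by
  have hdense := (Submodule.topologicalClosure_eq_top_iff).2
    (orthogonal_weakSolutionSpace (n := n) hc ha ha')
  have hQm : MeasurableSet (ball (0 : Spacetime n) 2) := measurableSet_ball
  set χ : Lp ℝ 2 (volume : Measure (Spacetime n)) :=
    indicatorConstLp 2 hQm measure_ball_lt_top.ne (1 : ℝ)
  have hmem : hg.toLp g ∈ (weakSolutionSpace (n := n) c ha ha').topologicalClosure := by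
    rw [hdense]; trivial
  obtain ⟨v, ⟨u, hu, huv⟩, hdist⟩ := Metric.mem_closure_iff.1 hmem (δ / (‖χ‖ + 1)) (by positivity)
  refine ⟨u, hu, ?_⟩
  have h1 : ∫ p in ball (0 : Spacetime n) 2, |u p - g p| = inner ℝ χ |v - hg.toLp g| := by
    rw [inner_eq_integral, ← integral_indicator hQm]
    refine integral_congr_ae ?_
    filter_upwards [huv, Lp.coeFn_abs (v - hg.toLp g), Lp.coeFn_sub v (hg.toLp g),
      hg.coeFn_toLp, indicatorConstLp_coeFn (p := 2) (hs := hQm)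
        (hμs := (measure_ball_lt_top (μ := volume) (x := (0 : Spacetime n)) (r := 2)).ne)
        (c := (1 : ℝ))] with p h2 h3 h4 h5 h6
    rw [h3, h4, h6, Pi.sub_apply, h5]
    by_cases hpQ : p ∈ ball (0 : Spacetime n) 2
    · rw [indicator_of_mem hpQ, indicator_of_mem hpQ, h2 hpQ, one_mul]
    · rw [indicator_of_notMem hpQ, indicator_of_notMem hpQ, zero_mul]
  rw [dist_comm, dist_eq_norm] at hdist
  rw [h1]
  calc inner ℝ χ |v - hg.toLp g| ≤ ‖χ‖ * ‖|v - hg.toLp g|‖ := real_inner_le_norm _ _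
    _ ≤ (‖χ‖ + 1) * (δ / (‖χ‖ + 1)) := by
      rw [norm_abs_eq_norm]
      gcongr
      linarith
    _ = δ := by field_simp

theorem iteratedFDeriv_comp_const_smul_of_isOpen {E F : Type*} [NormedAddCommGroup E]
    [NormedSpace ℝ E] [NormedAddCommGroup F] [NormedSpace ℝ F] {f : E → F} {s : Set E} {i : ℕ}
    (hs : IsOpen s) (hf : ContDiffOn ℝ i f s) (l : ℝ) {p : E} (hp : l • p ∈ s) :
    iteratedFDeriv ℝ i (fun q => f (l • q)) p = l ^ i • iteratedFDeriv ℝ i f (l • p) := by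
  set L : E →L[ℝ] E := l • ContinuousLinearMap.id ℝ E with hL
  have hLs : IsOpen (L ⁻¹' s) := hs.preimage L.continuous
  have hpL : p ∈ L ⁻¹' s := by simpa [hL] using hp
  have h := L.iteratedFDerivWithin_comp_right hf hs.uniqueDiffOn hLs.uniqueDiffOn hpL le_rfl
  rw [iteratedFDerivWithin_of_isOpen i hLs hpL, iteratedFDerivWithin_of_isOpen i hs hpL] at h
  have hfun : (f ∘ L) = fun q => f (l • q) := by
    ext q
    simp [hL]
  rw [hfun] at h
  rw [h]
  ext m
  have := (iteratedFDeriv ℝ i f (l • p)).map_smul_univ (fun _ => l) m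
  simpa [hL] using this

/-- A function of class `C^k` up to the boundary of the unit ball is approximated in `C^k` by
compactly supported functions of class `C^k` on the whole space. -/
theorem exists_contDiff_near {E : Type*} [NormedAddCommGroup E] [NormedSpace ℝ E]
    [FiniteDimensional ℝ E] {k : ℕ} {σ : E → ℝ} (hσ : ContDiffOn ℝ k σ (closedBall 0 1)) {ε : ℝ}
    (hε : 0 < ε) :
    ∃ g : E → ℝ, ContDiff ℝ k g ∧ HasCompactSupport g ∧
      ∀ i ≤ k, ∀ p ∈ ball (0 : E) 1, ‖iteratedFDeriv ℝ i (fun q => σ q - g q) p‖ ≤ ε := by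
  have hσb : ContDiffOn ℝ k σ (ball 0 1) := hσ.mono ball_subset_closedBall
  have huniq : UniqueDiffOn ℝ (closedBall (0 : E) 1) :=
    uniqueDiffOn_convex (convex_closedBall _ _)
      ⟨0, ball_subset_interior_closedBall (mem_ball_self one_pos)⟩
  have hcompact : IsCompact (closedBall (0 : E) 1) := isCompact_closedBall _ _
  have hat : ∀ p ∈ ball (0 : E) 1, ContDiffAt ℝ k σ p := fun p hp =>
    hσb.contDiffAt (isOpen_ball.mem_nhds hp)
  have hD : ∀ i ≤ k, ∀ p ∈ ball (0 : E) 1,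
      iteratedFDeriv ℝ i σ p = iteratedFDerivWithin ℝ i σ (closedBall 0 1) p := fun i hi p hp =>
    (iteratedFDerivWithin_eq_iteratedFDeriv huniq ((hat p hp).of_le (by exact_mod_cast hi))
      (ball_subset_closedBall hp)).symm
  have hsmul : ∀ l ∈ Ioo (0 : ℝ) 1, ∀ p ∈ ball (0 : E) 1, l • p ∈ ball (0 : E) 1 := by
    intro l hl p hp
    rw [mem_ball_zero_iff] at hp ⊢
    rw [norm_smul, Real.norm_of_nonneg hl.1.le]
    nlinarith [hl.1, hl.2, norm_nonneg p]
  have hclose : ∀ i ≤ k, ∀ᶠ l in 𝓝[<] (1 : ℝ), ∀ p ∈ ball (0 : E) 1,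
      ‖iteratedFDeriv ℝ i σ p - l ^ i • iteratedFDeriv ℝ i σ (l • p)‖ ≤ ε := by
    intro i hi
    have hcont := hσ.continuousOn_iteratedFDerivWithin (m := i) (by exact_mod_cast hi) huniq
    obtain ⟨C, hC⟩ := hcompact.exists_bound_of_continuousOn hcont
    obtain ⟨δ, hδ, hunif⟩ := Metric.uniformContinuousOn_iff.1
      (hcompact.uniformContinuousOn_of_continuous hcont) (ε / 2) (half_pos hε)
    have h1 : Tendsto (fun l : ℝ => 1 - l) (𝓝[<] 1) (𝓝 0) := by
      have : Tendsto (fun l : ℝ => 1 - l) (𝓝 1) (𝓝 0) :=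
        Continuous.tendsto' (by fun_prop) _ _ (sub_self _)
      exact this.mono_left nhdsWithin_le_nhds
    have h2 : Tendsto (fun l : ℝ => (1 - l ^ i) * C) (𝓝[<] 1) (𝓝 0) := by
      have : Tendsto (fun l : ℝ => (1 - l ^ i) * C) (𝓝 1) (𝓝 0) :=
        Continuous.tendsto' (by fun_prop) _ _ (by simp)
      exact this.mono_left nhdsWithin_le_nhds
    filter_upwards [h1.eventually (gt_mem_nhds hδ), h2.eventually (gt_mem_nhds (half_pos hε)),
      Ioo_mem_nhdsLT (zero_lt_one' ℝ)] with l hl1 hl2 hl p hp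
    have hlp := hsmul l hl p hp
    rw [hD i hi p hp, hD i hi _ hlp]
    have h3 : dist p (l • p) < δ := by
      rw [dist_eq_norm]
      have : p - l • p = (1 - l) • p := by rw [sub_smul, one_smul]
      rw [this, norm_smul, Real.norm_of_nonneg (by linarith [hl.2])]
      have := mem_ball_zero_iff.1 hp
      nlinarith [hl.1, hl.2, norm_nonneg p]
    have h4 := hunif p (ball_subset_closedBall hp) _ (ball_subset_closedBall hlp) h3
    rw [dist_eq_norm] at h4
    have h5 := hC _ (ball_subset_closedBall hlp)
    have hli : 0 ≤ 1 - l ^ i := sub_nonneg.2 (pow_le_one₀ hl.1.le hl.2.le)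
    set A := iteratedFDerivWithin ℝ i σ (closedBall 0 1) p
    set B := iteratedFDerivWithin ℝ i σ (closedBall 0 1) (l • p)
    calc ‖A - l ^ i • B‖ = ‖(A - B) + (1 - l ^ i) • B‖ := by
          congr 1
          rw [sub_smul, one_smul]
          abel
      _ ≤ ‖A - B‖ + (1 - l ^ i) * ‖B‖ := by
          refine (norm_add_le _ _).trans_eq ?_
          rw [norm_smul, Real.norm_of_nonneg hli]
      _ ≤ ε / 2 + (1 - l ^ i) * C := by gcongr
      _ ≤ ε := by linarith
  have hall : ∀ᶠ l in 𝓝[<] (1 : ℝ), ∀ i ∈ Finset.range (k + 1), ∀ p ∈ ball (0 : E) 1,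
      ‖iteratedFDeriv ℝ i σ p - l ^ i • iteratedFDeriv ℝ i σ (l • p)‖ ≤ ε :=
    (Finset.eventually_all _).2 fun i hi => hclose i (Nat.lt_succ_iff.1 (Finset.mem_range.1 hi))
  obtain ⟨l, hlclose, hl⟩ := (hall.and (Ioo_mem_nhdsLT (zero_lt_one' ℝ))).exists
  have hl1 : 1 < l⁻¹ := (one_lt_inv₀ hl.1).2 hl.2
  obtain ⟨r, hr1, hr⟩ := exists_between hl1
  obtain ⟨R, hrR, hR⟩ := exists_between hr
  let χ : ContDiffBump (0 : E) := ⟨r, R, by linarith, hrR⟩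
  have hσl : ∀ p ∈ ball (0 : E) l⁻¹, ContDiffAt ℝ k (fun q => σ (l • q)) p := by
    intro p hp
    have : l • p ∈ ball (0 : E) 1 := by
      rw [mem_ball_zero_iff] at hp ⊢
      rw [norm_smul, Real.norm_of_nonneg hl.1.le]
      calc l * ‖p‖ < l * l⁻¹ := mul_lt_mul_of_pos_left hp hl.1
        _ = 1 := mul_inv_cancel₀ hl.1.ne'
    exact (hat _ this).comp p (contDiffAt_id.const_smul l)
  refine ⟨fun p => χ p * σ (l • p), ?_, χ.hasCompactSupport.mul_right, ?_⟩
  · rw [contDiff_iff_contDiffAt]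
    intro p
    by_cases hp : p ∈ tsupport χ
    · refine χ.contDiffAt.mul (hσl p ?_)
      rw [χ.tsupport_eq] at hp
      exact closedBall_subset_ball hR hp
    · refine contDiffAt_const (c := (0 : ℝ)) |>.congr_of_eventuallyEq ?_
      filter_upwards [(isClosed_tsupport χ).isOpen_compl.mem_nhds hp] with q hq
      rw [image_eq_zero_of_notMem_tsupport hq, zero_mul]
  · intro i hi p hp
    have hloc : (fun q => σ q - χ q * σ (l • q)) =ᶠ[𝓝 p] fun q => σ q - σ (l • q) := by
      filter_upwards [isOpen_ball.mem_nhds hp] with q hq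
      have : χ q = 1 := χ.one_of_mem_closedBall
        (closedBall_subset_closedBall hr1.le (ball_subset_closedBall hq))
      rw [this, one_mul]
    have hik : (i : WithTop ℕ∞) ≤ k := by exact_mod_cast hi
    rw [(hloc.iteratedFDeriv ℝ i).eq_of_nhds, fun_iteratedFDeriv_sub_apply ((hat p hp).of_le hik)
      ((hσl p (ball_subset_ball hl1.le hp)).of_le hik),
      iteratedFDeriv_comp_const_smul_of_isOpen isOpen_ball (hσb.of_le hik) l (hsmul l hl p hp)]
    exact hlclose i (Finset.mem_range.2 (Nat.lt_succ_iff.2 hi)) p hp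

theorem exists_mollifier {g : Spacetime n → ℝ} {k : ℕ} (hg : ContDiff ℝ k g)
    (hcg : HasCompactSupport g) {ε : ℝ} (hε : 0 < ε) :
    ∃ φ : Spacetime n → ℝ, IsTest φ ∧ (∀ z, φ z ≠ 0 → ‖z‖ ≤ 1 / 2) ∧
      ∀ i ≤ k, ∀ p, ‖iteratedFDeriv ℝ i (fun q => mollify φ g q - g q) p‖ ≤ ε := by
  have hsmall : ∀ i ≤ k, ∀ᶠ r in 𝓝[>] (0 : ℝ), ∀ p q : Spacetime n, dist p q ≤ r →
      dist (iteratedFDeriv ℝ i g p) (iteratedFDeriv ℝ i g q) < ε := by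
    intro i hi
    have hunif := (hcg.iteratedFDeriv (𝕜 := ℝ) i).uniformContinuous_of_continuous
      (hg.continuous_iteratedFDeriv (by exact_mod_cast hi))
    obtain ⟨δ, hδ, h⟩ := Metric.uniformContinuous_iff.1 hunif ε hε
    filter_upwards [Ioo_mem_nhdsGT hδ] with r hr p q hpq
    exact h (hpq.trans_lt hr.2)
  have hall : ∀ᶠ r in 𝓝[>] (0 : ℝ), ∀ i ∈ Finset.range (k + 1), ∀ p q : Spacetime n,
      dist p q ≤ r → dist (iteratedFDeriv ℝ i g p) (iteratedFDeriv ℝ i g q) < ε :=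
    (Finset.eventually_all _).2 fun i hi => hsmall i (Nat.lt_succ_iff.1 (Finset.mem_range.1 hi))
  obtain ⟨r, hrclose, hr⟩ :=
    (hall.and (Ioo_mem_nhdsGT (show (0 : ℝ) < 1 / 2 by norm_num))).exists
  let χ : ContDiffBump (0 : Spacetime n) := ⟨r / 2, r, half_pos hr.1, half_lt_self hr.1⟩
  have hsupp : ∀ z, χ.normed volume z ≠ 0 → ‖z‖ ≤ r := by
    intro z hz
    have : z ∈ Function.support (χ.normed volume) := hz
    rw [χ.support_normed_eq, mem_ball_zero_iff] at this
    exact this.le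
  refine ⟨χ.normed volume, ⟨χ.contDiff_normed, χ.hasCompactSupport_normed⟩,
    fun z hz => (hsupp z hz).trans hr.2.le, fun i hi p => ?_⟩
  have hgi : ContDiff ℝ i g := hg.of_le (by exact_mod_cast hi)
  refine norm_iteratedFDeriv_mollify_sub_le i χ.integrable_normed χ.nonneg_normed
    χ.integral_normed hsupp hgi hcg (fun z hz q => ?_) p
  have hgz : ContDiff ℝ i fun q => g (q - z) := hgi.comp (contDiff_id.sub contDiff_const)
  rw [fun_iteratedFDeriv_sub_apply hgz.contDiffAt hgi.contDiffAt, iteratedFDeriv_comp_sub,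
    ← dist_eq_norm]
  refine (hrclose i (Finset.mem_range.2 (Nat.lt_succ_iff.2 hi)) _ _ ?_).le
  rw [dist_eq_norm]
  simpa using hz

/-- Mean closeness in the ball of radius `2` gives, after mollification, closeness of the
derivatives in the unit ball. -/
theorem norm_iteratedFDeriv_mollify_le_mul {d φ : Spacetime n → ℝ} (hd : Integrable d)
    (hφ : IsTest φ) (hsupp : ∀ z, φ z ≠ 0 → ‖z‖ ≤ 1 / 2) (i : ℕ) {M : ℝ}
    (hM : ∀ z, ‖iteratedFDeriv ℝ i φ z‖ ≤ M) {p : Spacetime n} (hp : p ∈ ball (0 : Spacetime n) 1) :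
    ‖iteratedFDeriv ℝ i (mollify d φ) p‖ ≤ M * ∫ z in ball (0 : Spacetime n) 2, |d z| := by
  have hφi : ContDiff ℝ i φ := hφ.1.of_le (by exact_mod_cast le_top)
  refine (norm_iteratedFDeriv_mollify_le i hd.locallyIntegrable hφi hφ.2 p).trans ?_
  rw [← integral_const_mul, ← integral_indicator measurableSet_ball]
  refine integral_mono_of_nonneg (.of_forall fun z => by positivity)
    ((hd.abs.const_mul M).indicator measurableSet_ball) (.of_forall fun z => ?_)
  by_cases hz : z ∈ ball (0 : Spacetime n) 2
  · simp only [indicator_of_mem hz]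
    rw [mul_comm]
    exact mul_le_mul_of_nonneg_right (hM _) (abs_nonneg _)
  · simp only [indicator_of_notMem hz]
    have htsupp : tsupport φ ⊆ closedBall 0 (1 / 2) :=
      closure_minimal (fun z hz => mem_closedBall_zero_iff.2 (hsupp z hz)) isClosed_closedBall
    have h0 : iteratedFDeriv ℝ i φ (p - z) = 0 := by
      by_contra hne
      have h1 := mem_closedBall_zero_iff.1 (htsupp (support_iteratedFDeriv_subset i hne))
      rw [mem_ball_zero_iff] at hz hp
      have h2 := norm_sub_norm_le z p
      rw [norm_sub_rev] at h2
      linarith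
    rw [h0, norm_zero, mul_zero]

theorem mollify_sub {u g φ : Spacetime n → ℝ} (hu : Integrable u) (hg : Integrable g)
    (hφ : IsTest φ) (p : Spacetime n) :
    mollify (fun z => u z - g z) φ p = mollify u φ p - mollify g φ p := by
  simp only [mollify, smul_eq_mul, sub_mul]
  exact integral_sub (integrable_mul_isTest hu (hφ.reflect p))
    (integrable_mul_isTest hg (hφ.reflect p))

/-- Every function of class `C^k` up to the boundary is locally close in `C^k` to a smooth
compactly supported function solving the fractional heat equation in the unit ball. -/
theorem exists_isTest_solution_near [NeZero n] {c a : ℝ} (hc : 0 < c) (ha : (n : ℝ) < a)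
    (ha' : a < n + 2) {k : ℕ} {σ : Spacetime n → ℝ} (hσ : ContDiffOn ℝ k σ (closedBall 0 1))
    {ε : ℝ} (hε : 0 < ε) :
    ∃ U : Spacetime n → ℝ, IsTest U ∧
      (∀ p ∈ ball (0 : Spacetime n) 1, fracOp c a U p = -timeDeriv U p) ∧
      ∀ i ≤ k, ∀ p ∈ ball (0 : Spacetime n) 1,
        ‖iteratedFDeriv ℝ i (fun q => σ q - U q) p‖ ≤ ε := by
  obtain ⟨g, hg, hcg, hσg⟩ := exists_contDiff_near hσ (show 0 < ε / 3 by positivity)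
  obtain ⟨φ, hφ, hφsupp, hφg⟩ := exists_mollifier hg hcg (show 0 < ε / 3 by positivity)
  have hgint : Integrable g := hg.continuous.integrable_of_hasCompactSupport hcg
  have hbound : ∀ i : ℕ, ∃ M, ∀ z, ‖iteratedFDeriv ℝ i φ z‖ ≤ M := fun i =>
    (hφ.1.continuous_iteratedFDeriv (m := i)
      (by exact_mod_cast le_top)).bounded_above_of_compact_support
      (hφ.2.iteratedFDeriv i)
  choose M hM using hbound
  have hM0 : ∀ i, 0 ≤ M i := fun i => (norm_nonneg _).trans (hM i 0)
  set S := ∑ i ∈ Finset.range (k + 1), M i with hS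
  have hS0 : 0 ≤ S := Finset.sum_nonneg fun i _ => hM0 i
  obtain ⟨u, ⟨hu, hcu, hsol⟩, hug⟩ := exists_isWeakSolution_integral_le (n := n) hc ha ha'
    (hg.continuous.memLp_of_hasCompactSupport hcg) (show 0 < ε / 3 / (S + 1) by positivity)
  have huint : Integrable u := integrable_of_memLp_of_hasCompactSupport hu hcu
  have hU : IsTest (mollify u φ) := isTest_mollify huint hcu hφ
  have hG : IsTest (mollify g φ) := isTest_mollify hgint hcg hφ
  refine ⟨mollify u φ, hU, fun p hp => ?_, fun i hi p hp => ?_⟩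
  · refine timeDeriv_mollify_add_fracOp ha ha' huint hcu hφ (hsol _ ⟨hφ.reflect p, fun z hz => ?_⟩)
    by_contra hne
    have h1 := hφsupp _ hne
    rw [mem_ball_zero_iff] at hz hp
    have h2 := norm_sub_norm_le z p
    rw [norm_sub_rev] at h2
    linarith
  · have hik : (i : WithTop ℕ∞) ≤ k := by exact_mod_cast hi
    have hσp : ContDiffAt ℝ i σ p :=
      ((hσ.mono ball_subset_closedBall).contDiffAt (isOpen_ball.mem_nhds hp)).of_le hik
    have hgp : ContDiffAt ℝ i g p := (hg.of_le hik).contDiffAt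
    have hUp : ContDiffAt ℝ i (mollify u φ) p :=
      (hU.1.of_le (by exact_mod_cast le_top)).contDiffAt
    have hGp : ContDiffAt ℝ i (mollify g φ) p :=
      (hG.1.of_le (by exact_mod_cast le_top)).contDiffAt
    have h1 := hσg i hi p hp
    have h2 := hφg i hi p
    have h3 := norm_iteratedFDeriv_mollify_le_mul (huint.sub hgint) hφ hφsupp i (hM i) hp
    have hdiff : mollify (u - g) φ = fun q => mollify u φ q - mollify g φ q :=
      funext fun q => mollify_sub huint hgint hφ q
    have h4 : M i * ∫ z in ball (0 : Spacetime n) 2, |(u - g) z| ≤ ε / 3 := by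
      have hMS : M i ≤ S := Finset.single_le_sum (f := M) (fun j _ => hM0 j)
        (Finset.mem_range.2 (Nat.lt_succ_iff.2 hi))
      calc M i * ∫ z in ball (0 : Spacetime n) 2, |(u - g) z|
          ≤ (S + 1) * (ε / 3 / (S + 1)) := by
            gcongr
            · linarith
            · exact hug
        _ = ε / 3 := by field_simp
    rw [fun_iteratedFDeriv_sub_apply hσp hgp] at h1
    rw [mollify_comm, fun_iteratedFDeriv_sub_apply hGp hgp] at h2
    rw [hdiff, fun_iteratedFDeriv_sub_apply hUp hGp] at h3
    rw [fun_iteratedFDeriv_sub_apply hσp hUp]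
    calc _ = ‖(iteratedFDeriv ℝ i σ p - iteratedFDeriv ℝ i g p) -
          (iteratedFDeriv ℝ i (mollify g φ) p - iteratedFDeriv ℝ i g p) -
          (iteratedFDeriv ℝ i (mollify u φ) p - iteratedFDeriv ℝ i (mollify g φ) p)‖ := by
            congr 1
            abel
      _ ≤ ε / 3 + ε / 3 + ε / 3 :=
        (norm_sub_le _ _).trans (add_le_add ((norm_sub_le _ _).trans (add_le_add h1 h2))
          (h3.trans h4))
      _ = ε := by ring

theorem fracC_pos {s : ℝ} (hs : s ∈ Ioo (0 : ℝ) 1) : 0 < fracC n s := by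
  have h1 : 0 < Real.Gamma ((n : ℝ) / 2 + s) := Real.Gamma_pos_of_pos (by
    have := hs.1
    positivity)
  have h2 : 0 < Real.Gamma (1 - s) := Real.Gamma_pos_of_pos (by linarith [hs.2])
  have h3 := hs.1
  unfold fracC
  positivity

end FractionalHeat

/-- Exhaustion of a slightly modified resource by a population satisfying a nonlocal
logistic equation: given a positive resource `σ ∈ C^k(closure B₁ × [-1,1])` and `ε > 0`,
there are positive (in `B₁ × (-1,1)`) functions `u_ε, σ_ε`, smooth in `B₁ × (-1,1)`,
continuous and compactly supported in `ℝ^{n+1}`, with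
`∂ₜ u_ε + (-Δ)ˢ u_ε = (σ_ε - u_ε) u_ε` and `u_ε = σ_ε` in `B₁ × (-1,1)`, and
`‖σ - σ_ε‖_{C^k(B₁ × (-1,1))} ≤ ε`. -/
theorem population_exhausts_modified_resource
    (n : ℕ) (hn : 1 ≤ n) (s : ℝ) (hs : s ∈ Set.Ioo (0 : ℝ) 1) (k : ℕ) (ε : ℝ) (hε : 0 < ε)
    (σ : EuclideanSpace ℝ (Fin n) × ℝ → ℝ)
    (hσ : ContDiffOn ℝ k σ (Metric.closedBall 0 1 ×ˢ Set.Icc (-1 : ℝ) 1))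
    (hσpos : ∀ p ∈ Metric.closedBall (0 : EuclideanSpace ℝ (Fin n)) 1 ×ˢ Set.Icc (-1 : ℝ) 1,
      0 < σ p) :
    ∃ u σε : EuclideanSpace ℝ (Fin n) × ℝ → ℝ,
      Continuous u ∧ HasCompactSupport u ∧ Continuous σε ∧ HasCompactSupport σε ∧
      ContDiffOn ℝ (⊤ : ℕ∞) u (Metric.ball 0 1 ×ˢ Set.Ioo (-1 : ℝ) 1) ∧
      ContDiffOn ℝ (⊤ : ℕ∞) σε (Metric.ball 0 1 ×ˢ Set.Ioo (-1 : ℝ) 1) ∧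
      (∀ p ∈ Metric.ball (0 : EuclideanSpace ℝ (Fin n)) 1 ×ˢ Set.Ioo (-1 : ℝ) 1,
        0 < u p ∧ 0 < σε p) ∧
      -- (1) the nonlocal logistic equation `∂ₜ u + (-Δ)ˢ u = (σ_ε - u) u` in `B₁ × (-1,1)`
      (∀ x ∈ Metric.ball (0 : EuclideanSpace ℝ (Fin n)) 1, ∀ t ∈ Set.Ioo (-1 : ℝ) 1,
        HasFracLap n s (fun y => u (y, t)) x
          ((σε (x, t) - u (x, t)) * u (x, t) - deriv (fun τ => u (x, τ)) t)) ∧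
      -- (2) the population exhausts the resource
      (∀ p ∈ Metric.ball (0 : EuclideanSpace ℝ (Fin n)) 1 ×ˢ Set.Ioo (-1 : ℝ) 1,
        u p = σε p) ∧
      -- (3) the resource is only slightly modified
      (∀ i ≤ k, ∀ p ∈ Metric.ball (0 : EuclideanSpace ℝ (Fin n)) 1 ×ˢ Set.Ioo (-1 : ℝ) 1,
        ‖iteratedFDeriv ℝ i (fun q => σ q - σε q) p‖ ≤ ε) := by
  have : NeZero n := ⟨by omega⟩
  have hclosed : Metric.closedBall (0 : EuclideanSpace ℝ (Fin n)) 1 ×ˢ Set.Icc (-1 : ℝ) 1 =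
      Metric.closedBall (0 : FractionalHeat.Spacetime n) 1 := by
    have : Set.Icc (-1 : ℝ) 1 = Metric.closedBall 0 1 := by simp [Real.closedBall_eq_Icc]
    rw [this, closedBall_prod_same]
    rfl
  have hopen : Metric.ball (0 : EuclideanSpace ℝ (Fin n)) 1 ×ˢ Set.Ioo (-1 : ℝ) 1 =
      Metric.ball (0 : FractionalHeat.Spacetime n) 1 := by
    have : Set.Ioo (-1 : ℝ) 1 = Metric.ball 0 1 := by simp [Real.ball_eq_Ioo]
    rw [this, ball_prod_same]
    rfl
  rw [hclosed] at hσ hσpos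
  obtain ⟨p₀, hp₀, hmin⟩ := (isCompact_closedBall (0 : FractionalHeat.Spacetime n)
    1).exists_isMinOn ⟨0, Metric.mem_closedBall_self zero_le_one⟩ hσ.continuousOn
  have hm := hσpos p₀ hp₀
  obtain ⟨U, hU, hsol, hclose⟩ := FractionalHeat.exists_isTest_solution_near
    (FractionalHeat.fracC_pos (n := n) hs) (a := (n : ℝ) + 2 * s) (by linarith [hs.1])
    (by linarith [hs.2]) hσ (show 0 < min ε (σ p₀ / 2) by positivity)
  have hpos : ∀ p ∈ Metric.ball (0 : FractionalHeat.Spacetime n) 1, 0 < U p := by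
    intro p hp
    have h1 := hclose 0 (Nat.zero_le k) p hp
    rw [norm_iteratedFDeriv_zero, Real.norm_eq_abs] at h1
    have h2 := (le_abs_self _).trans (h1.trans (min_le_right _ _))
    have h3 : σ p₀ ≤ σ p := hmin (Metric.ball_subset_closedBall hp)
    linarith
  rw [hopen]
  refine ⟨U, U, hU.continuous, hU.2, hU.continuous, hU.2, hU.1.contDiffOn, hU.1.contDiffOn,
    fun p hp => ⟨hpos p hp, hpos p hp⟩, fun x hx t ht => ?_, fun _ _ => rfl,
    fun i hi p hp => (hclose i hi p hp).trans (min_le_left _ _)⟩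
  have hxt : (x, t) ∈ Metric.ball (0 : FractionalHeat.Spacetime n) 1 := hopen ▸ ⟨hx, ht⟩
  rw [sub_self, zero_mul, zero_sub, hU.deriv_eq_timeDeriv, ← hsol _ hxt]
  exact hU.hasFracLap hs x t
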